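/- For every n ≥ 1, every skew shape λ/μ, all alphabets A = {1,…,r}, A′ = {1′,…,s′}, and every total order ≺ on A ∪ A′ refining the natural orders of A and of A′, the super LLT polynomial G_{λ/μ}(X/Y;q) is a symmetric polynomial in the variables x_1,…,x_r and, separately, a symmetric polynomial in the variables y_{1′},…,y_{s′}. -/

import Mathlib

/-!
The super LLT polynomial is a matrix coefficient of a product of commuting operators, one for
each letter, so permuting the variables within an alphabet only permutes the factors.

**Ribbons as bead moves.** A Young diagram is encoded by its heights `ht` along diagonals, i.e.
by its Maya diagram. Adding an `n`-ribbon with contents `p, …, p + n - 1` moves a bead from `p`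
to `p + n`, and the spin is the number of beads jumped over (`IsAdd.spin_eq`). This gives
operators `u_p = addOp n q p` on the free module on Young diagrams. They satisfy the relations
`RibbonRel`: `u_i` and `u_j` commute for `|i - j| > n` and commute up to the factor `q ^ 2` for
`0 < |i - j| < n`, while `u_i ^ 2`, `u_i u_{i+n} u_i` and `u_{i+n} u_i u_{i+n}` vanish. All of
these are comparisons of height functions (`addOp_ribbonRel`).

**Commutativity.** Let `H(t) = (1 + t u_{k-1}) ⋯ (1 + t u_0)`, formalized as `hProd`. Conjugating
`u_k` by `H(s)` yields `u_k + s c_k` with `c_k` independent of `s` and `u_k c_k = 0`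
(`RibbonRel.hProd_mul`, `RibbonRel.mul_corr`). Hence the product for `k + 1` at `s` times the
product for `k + 1` at `t` is `(1 + (s + t) u_k + s t c_k) H(s) H(t)`, which is symmetric in `s`
and `t` by induction (`RibbonRel.hProd_comm`). Since `u_i ^ 2 = 0`, the product `vProd` in the
opposite order at `-t` is the inverse of `H(t)`, so all these operators commute
(`RibbonRel.letterOp_comm`).

**Strips.** A horizontal ribbon strip is built in exactly one way by adding ribbons from left to
right: the ribbon with the largest content is removable and all other ribbons start further to
the left (`IsStrip.peel_north`, `IsStrip.insert`). Vertical strips are built from right to left.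
Therefore the coefficients of `hProd` and `vProd` are the generating functions of horizontal and
vertical strips (`letterOp_apply`).

**Tableaux.** Removing the ribbons with the largest letter (`IsSuperTableau.split`, inverse to
`IsSuperTableau.join`) expresses the super LLT polynomial as a coefficient of the product of the
operators of all letters (`tabs_sum`), and `superLLT_perm` concludes.
-/

open Finset

namespace SuperLLT

/-- Two cells in `ℕ × ℕ` are adjacent if they share an edge. -/
def Adj (c d : ℕ × ℕ) : Prop :=
  (c.1 = d.1 ∧ (c.2 + 1 = d.2 ∨ d.2 + 1 = c.2)) ∨
    (c.2 = d.2 ∧ (c.1 + 1 = d.1 ∨ d.1 + 1 = c.1))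

/-- A finite set of cells is connected if any two of its cells are joined by a path of
adjacent cells staying inside the set. -/
def ConnectedCells (s : Finset (ℕ × ℕ)) : Prop :=
  ∀ c ∈ s, ∀ d ∈ s, Relation.ReflTransGen (fun a b => a ∈ s ∧ b ∈ s ∧ Adj a b) c d

/-- A set of cells is (the set of cells of) a skew shape if it is the difference of two
Young diagrams. -/
def IsSkewCells (s : Finset (ℕ × ℕ)) : Prop :=
  ∃ μ lam : YoungDiagram, μ ≤ lam ∧ s = lam.cells \ μ.cells

/-- The set of cells contains no 2×2 square. -/
def NoTwoByTwo (s : Finset (ℕ × ℕ)) : Prop :=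
  ∀ i j : ℕ, ¬((i, j) ∈ s ∧ (i + 1, j) ∈ s ∧ (i, j + 1) ∈ s ∧ (i + 1, j + 1) ∈ s)

/-- An `n`-ribbon: a connected skew shape with `n` cells containing no 2×2 square. -/
def IsRibbon (n : ℕ) (s : Finset (ℕ × ℕ)) : Prop :=
  s.card = n ∧ IsSkewCells s ∧ ConnectedCells s ∧ NoTwoByTwo s

/-- The spin of a ribbon: its number of rows minus one. -/
def spin (s : Finset (ℕ × ℕ)) : ℕ :=
  (s.image Prod.fst).card - 1

/-- The top-right-most cell of a ribbon: minimal row index, maximal column in that row. -/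
def topRight (s : Finset (ℕ × ℕ)) : ℕ × ℕ :=
  ((s.image Prod.fst).min.getD 0,
    ((s.filter fun c => c.1 = (s.image Prod.fst).min.getD 0).image Prod.snd).max.getD 0)

/-- The bottom-left-most cell of a ribbon: maximal row index, minimal column in that row. -/
def bottomLeft (s : Finset (ℕ × ℕ)) : ℕ × ℕ :=
  ((s.image Prod.fst).max.getD 0,
    ((s.filter fun c => c.1 = (s.image Prod.fst).max.getD 0).image Prod.snd).min.getD 0)

/-- The cell `c` of the strip with cell set `strip` touches the northern boundary of the
strip: the cell directly above `c` is not a cell of the strip. -/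
def TouchesNorth (strip : Finset (ℕ × ℕ)) (c : ℕ × ℕ) : Prop :=
  c.1 = 0 ∨ (c.1 - 1, c.2) ∉ strip

/-- The cell `c` lies along the (upper-left) boundary of the strip: the cell directly to
the left of `c` is not a cell of the strip.  This is the condition on the bottom-left-most
box of each ribbon of a vertical ribbon strip (equivalently, flipping a vertical strip over
the antidiagonal produces a horizontal strip whose ribbon heads touch the northern
boundary). -/
def TouchesWest (strip : Finset (ℕ × ℕ)) (c : ℕ × ℕ) : Prop :=
  c.2 = 0 ∨ (c.1, c.2 - 1) ∉ strip

/-- `tiles` is a tiling of the cell set `cells` by `n`-ribbons. -/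
def IsTilingOf (n : ℕ) (cells : Finset (ℕ × ℕ)) (tiles : Finset (Finset (ℕ × ℕ))) : Prop :=
  (∀ t ∈ tiles, IsRibbon n t) ∧
    (∀ t ∈ tiles, ∀ t' ∈ tiles, t ≠ t' → Disjoint t t') ∧
    tiles.sup id = cells

/-- A horizontal `n`-ribbon strip tiling: the top-right-most box of every ribbon touches
the northern boundary of the strip. -/
def IsHorizontalTiling (n : ℕ) (cells : Finset (ℕ × ℕ))
    (tiles : Finset (Finset (ℕ × ℕ))) : Prop :=
  IsTilingOf n cells tiles ∧ ∀ t ∈ tiles, TouchesNorth cells (topRight t)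

/-- A vertical `n`-ribbon strip tiling: the bottom-left-most box of every ribbon lies on
the (north-west) boundary of the strip. -/
def IsVerticalTiling (n : ℕ) (cells : Finset (ℕ × ℕ))
    (tiles : Finset (Finset (ℕ × ℕ))) : Prop :=
  IsTilingOf n cells tiles ∧ ∀ t ∈ tiles, TouchesWest cells (bottomLeft t)

open scoped Classical in
/-- `T` is a super `n`-ribbon tableau of shape `lam / μ`: a set of `n`-ribbons, each
labelled by a letter of `L`, tiling `lam / μ`, such that for every letter `i` the union of
`μ` with the ribbons labelled `≼ i` (with respect to the total order `le` on `L`) is a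
partition shape, the ribbons with a fixed label `a` with `horiz a` form a horizontal
ribbon strip, and the ribbons with a fixed label `b` with `¬ horiz b` form a vertical
ribbon strip. -/
def IsSuperTableau (n : ℕ) (μ lam : YoungDiagram) {L : Type*}
    (le : L → L → Prop) (horiz : L → Prop) (T : Finset (Finset (ℕ × ℕ) × L)) : Prop :=
  μ ≤ lam ∧
    (∀ p ∈ T, IsRibbon n p.1) ∧
    (∀ p ∈ T, ∀ p' ∈ T, p ≠ p' → Disjoint p.1 p'.1) ∧
    (T.sup fun p => p.1) = lam.cells \ μ.cells ∧
    (∀ i : L, ∃ ν : YoungDiagram,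
      ν.cells = μ.cells ∪ ((T.filter fun p => le p.2 i).sup fun p => p.1)) ∧
    (∀ p ∈ T,
      (horiz p.2 →
        TouchesNorth ((T.filter fun p' => p'.2 = p.2).sup fun p' => p'.1) (topRight p.1)) ∧
      (¬horiz p.2 →
        TouchesWest ((T.filter fun p' => p'.2 = p.2).sup fun p' => p'.1) (bottomLeft p.1)))

open scoped Classical in
/-- The (finite) set of all super `n`-ribbon tableaux of shape `lam / μ` with letters in
`L`. -/
noncomputable def superTableaux (n : ℕ) (μ lam : YoungDiagram) (L : Type*) [Fintype L]
    (le : L → L → Prop) (horiz : L → Prop) : Finset (Finset (Finset (ℕ × ℕ) × L)) :=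
  ((lam.cells \ μ.cells).powerset ×ˢ (Finset.univ : Finset L)).powerset.filter
    (IsSuperTableau n μ lam le horiz)

/-- The spin of a tableau: the sum of the spins of its ribbons. -/
def tabSpin {L : Type*} (T : Finset (Finset (ℕ × ℕ) × L)) : ℕ :=
  ∑ p ∈ T, spin p.1

open scoped Classical in
/-- The number of ribbons of the tableau `T` labelled `a`. -/
noncomputable def tabWt {L : Type*} (T : Finset (Finset (ℕ × ℕ) × L)) (a : L) : ℕ :=
  (T.filter fun p => p.2 = a).card

open scoped Classical in
/-- The super LLT polynomial `G_{lam/μ}(X/Y; q)`, evaluated in a commutative ring `R`: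
`q` is the spin parameter and `z a` is the variable attached to the letter `a`; a ribbon
labelled by a horizontal letter `a` contributes a factor `z a`, and one labelled by a
vertical letter `b` contributes `-(z b)`.  (It is `0` if `¬ μ ≤ lam`.) -/
noncomputable def superLLT (n : ℕ) (μ lam : YoungDiagram) (L : Type*) [Fintype L]
    (le : L → L → Prop) (horiz : L → Prop) {R : Type*} [CommRing R] (q : R) (z : L → R) :
    R :=
  ∑ T ∈ superTableaux n μ lam L le horiz,
    q ^ tabSpin T * ∏ a : L, (if horiz a then z a else -z a) ^ tabWt T a

/-- The total order on `Fin r ⊕ Fin s` in which all letters of the first alphabet precede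
all letters of the second alphabet. -/
def sumLe {r s : ℕ} : Fin r ⊕ Fin s → Fin r ⊕ Fin s → Prop
  | Sum.inl i, Sum.inl j => i ≤ j
  | Sum.inl _, Sum.inr _ => True
  | Sum.inr _, Sum.inl _ => False
  | Sum.inr i, Sum.inr j => i ≤ j

end SuperLLT

namespace SuperLLT

/-! ### Commuting transfer operators from the ribbon relations -/

section Algebra

variable {R A : Type*} [CommRing R] [Ring A] [Algebra R A]

/-- The relations between the ribbon-adding operators `u 0, u 1, …` on which commutativity
rests.  The relation `triple` follows from `qcomm` when `Q` is invertible. -/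
structure RibbonRel (n : ℕ) (Q : R) (u : ℕ → A) : Prop where
  sq : ∀ i, u i * u i = 0
  far : ∀ i j, i + n < j → u i * u j = u j * u i
  qcomm : ∀ i j, i < j → j < i + n → u j * u i = Q • (u i * u j)
  aba : ∀ i, u i * u (i + n) * u i = 0
  bab : ∀ i, u (i + n) * u i * u (i + n) = 0
  triple : ∀ i k, i < k → k < i + n → u k * (u (i + n) * u i) = u (i + n) * u i * u k

/-- The ordered product `(1 + t u_{k-1}) ⋯ (1 + t u_0)`. -/
def hProd (u : ℕ → A) (t : R) : ℕ → A
  | 0 => 1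
  | k + 1 => (1 + t • u k) * hProd u t k

/-- The product `(1 + t u_0) ⋯ (1 + t u_{k-1})` in the opposite order. -/
def vProd (u : ℕ → A) (t : R) : ℕ → A
  | 0 => 1
  | k + 1 => vProd u t k * (1 + t • u k)

/-- The correction term in `hProd u s m * u k = (u k + s • corr n Q u k m) * hProd u s m`
for `m ≤ k`. -/
def corr (n : ℕ) (Q : R) (u : ℕ → A) (k : ℕ) : ℕ → A
  | 0 => 0
  | m + 1 => corr n Q u k m +
      (if k < m + n then (1 - Q) • (u m * u k)
        else if m + n = k then u m * u k - u k * u m else 0)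

variable {n : ℕ} {Q : R} {u : ℕ → A}

theorem corr_eq_zero (k m : ℕ) (h : m + n ≤ k) : corr n Q u k m = 0 := by
  induction m with
  | zero => rfl
  | succ m ih =>
    rw [corr, ih (by omega), if_neg (by omega), if_neg (by omega), add_zero]

/-- The lower factors at distance less than `n` commute with the correction: in a term
`u j * u k` with `j < c < k`, the factors `Q` from moving `u c` past `u j` and past `u k`
cancel. -/
theorem RibbonRel.corr_comm (hu : RibbonRel n Q u) (k m c : ℕ) (hmc : m ≤ c) (hck : c < k)
    (hc : k < c + n) : u c * corr n Q u k m = corr n Q u k m * u c := by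
  induction m with
  | zero => simp [corr]
  | succ m ih =>
    rw [corr, mul_add, add_mul, ih (by omega)]
    congr 1
    split_ifs with h1 h2
    · rw [mul_smul_comm, smul_mul_assoc]
      congr 1
      rw [← mul_assoc, hu.qcomm m c (by omega) (by omega), mul_assoc, hu.qcomm c k hck hc,
        smul_mul_assoc, mul_smul_comm, mul_assoc]
    · subst h2
      rw [mul_sub, sub_mul, hu.triple m c (by omega) (by omega)]
      congr 1
      rw [← mul_assoc, hu.qcomm m c (by omega) (by omega), mul_assoc,
        hu.qcomm c _ hck hc, smul_mul_assoc, mul_smul_comm, mul_assoc]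
    · simp

theorem RibbonRel.mul_corr (hu : RibbonRel n Q u) (k m : ℕ) (hm : m ≤ k) :
    u k * corr n Q u k m = 0 := by
  induction m with
  | zero => simp [corr]
  | succ m ih =>
    rw [corr, mul_add, ih (by omega), zero_add]
    split_ifs with h1 h2
    · rw [mul_smul_comm, ← mul_assoc, hu.qcomm m k (by omega) h1, smul_mul_assoc, mul_assoc,
        hu.sq]
      simp
    · subst h2
      rw [mul_sub, ← mul_assoc, ← mul_assoc, hu.bab, hu.sq]
      simp
    · simp

/-- Conjugating `u k` by the product of the lower factors changes it only by a term linear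
in `s`. -/
theorem RibbonRel.hProd_mul (hu : RibbonRel n Q u) (s : R) (k m : ℕ) (hm : m ≤ k) :
    hProd u s m * u k = (u k + s • corr n Q u k m) * hProd u s m := by
  induction m with
  | zero => simp [hProd, corr]
  | succ m ih =>
    rw [hProd, mul_assoc, ih (by omega), ← mul_assoc, ← mul_assoc]
    congr 1
    rcases lt_trichotomy (m + n) k with h | h | h
    · rw [corr_eq_zero k m h.le, corr_eq_zero k (m + 1) (by omega)]
      simp only [smul_zero, add_zero, add_mul, mul_add, one_mul, mul_one, smul_mul_assoc,
        mul_smul_comm, hu.far m k h]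
    · subst h
      rw [corr, corr_eq_zero _ m le_rfl, if_neg (by omega), if_pos rfl]
      have h1 := hu.aba m
      have h2 : u (m + n) * u m * u m = 0 := by rw [mul_assoc, hu.sq, mul_zero]
      simp only [smul_zero, add_zero, zero_add, add_mul, mul_add, one_mul, mul_one,
        smul_mul_assoc, mul_smul_comm, smul_sub, sub_mul, h1, h2]
      module
    · rw [corr, if_pos h]
      have h1 : u m * u k * u m = 0 := by
        rw [mul_assoc, hu.qcomm m k (by omega) h, mul_smul_comm, ← mul_assoc, hu.sq]
        simp
      have h2 := hu.corr_comm k m m le_rfl (by omega) h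
      simp only [add_mul, mul_add, one_mul, mul_one, smul_mul_assoc, mul_smul_comm, h1, h2,
        hu.qcomm m k (by omega) h, smul_add, smul_zero, add_zero]
      module

theorem RibbonRel.hProd_comm (hu : RibbonRel n Q u) (s t : R) (k : ℕ) :
    Commute (hProd u s k) (hProd u t k) := by
  induction k with
  | zero => exact Commute.one_left _
  | succ k ih =>
    have key : ∀ s t : R, hProd u s (k + 1) * hProd u t (k + 1) =
        (1 + (s + t) • u k + (s * t) • corr n Q u k k) * (hProd u s k * hProd u t k) := by
      intro s t
      have e : (1 + s • u k) * (1 + t • (u k + s • corr n Q u k k)) =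
          1 + (s + t) • u k + (s * t) • corr n Q u k k := by
        simp only [add_mul, mul_add, one_mul, mul_one, smul_mul_assoc, mul_smul_comm, hu.sq,
          hu.mul_corr k k le_rfl, smul_add, smul_zero, add_zero]
        module
      rw [← e, hProd, hProd, mul_assoc, ← mul_assoc (hProd u s k), mul_add, mul_one,
        mul_smul_comm, hu.hProd_mul s k k le_rfl, ← smul_mul_assoc]
      simp only [mul_assoc, add_mul, mul_add, one_mul]
    rw [Commute, SemiconjBy, key, key, ih.eq, add_comm s t, mul_comm s t]

theorem RibbonRel.hProd_mul_vProd (hu : RibbonRel n Q u) (t : R) (k : ℕ) :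
    hProd u t k * vProd u (-t) k = 1 ∧ vProd u (-t) k * hProd u t k = 1 := by
  induction k with
  | zero => simp [hProd, vProd]
  | succ k ih =>
    have h1 : (1 + t • u k) * (1 + (-t) • u k) = 1 := by
      simp [add_mul, mul_add, hu.sq]
    have h2 : (1 + (-t) • u k) * (1 + t • u k) = 1 := by
      simp [add_mul, mul_add, hu.sq]
    constructor
    · rw [hProd, vProd, mul_assoc, ← mul_assoc (hProd u t k), ih.1, one_mul, h1]
    · rw [hProd, vProd, mul_assoc, ← mul_assoc (1 + (-t) • u k), h2, one_mul, ih.2]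

/-- The transfer operator of a letter: `hProd` for a horizontal letter, `vProd` for a
vertical one. -/
def letterOp (u : ℕ → A) (k : ℕ) (b : Bool) (t : R) : A :=
  if b then hProd u t k else vProd u t k

theorem commute_of_inverse {a b b' : A} (h : Commute a b) (h1 : b * b' = 1) (h2 : b' * b = 1) :
    Commute a b' := by
  have : Commute a ((⟨b, b', h1, h2⟩ : Aˣ) : A) := h
  exact this.units_inv_right

/-- All transfer operators commute: the horizontal ones by `RibbonRel.hProd_comm`, the
vertical ones because they are inverses of horizontal ones. -/
theorem RibbonRel.letterOp_comm (hu : RibbonRel n Q u) (k : ℕ) (b c : Bool)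
    (s t : R) : Commute (letterOp u k b s) (letterOp u k c t) := by
  have hv : ∀ s t : R, Commute (hProd u s k) (vProd u t k) := fun s t => by
    have h := hu.hProd_mul_vProd (-t) k
    rw [neg_neg] at h
    exact commute_of_inverse (hu.hProd_comm s (-t) k) h.1 h.2
  have hvv : ∀ s t : R, Commute (vProd u s k) (vProd u t k) := fun s t => by
    have h := hu.hProd_mul_vProd (-t) k
    rw [neg_neg] at h
    exact commute_of_inverse (hv (-t) s).symm h.1 h.2
  cases b <;> cases c <;> simp only [letterOp, if_true, if_false, Bool.false_eq_true]
  · exact hvv s t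
  · exact (hv t s).symm
  · exact hv s t
  · exact hu.hProd_comm s t k

end Algebra

/-! ### Diagonal heights of a Young diagram -/

/-- The content of a cell. -/
def ct (c : ℕ × ℕ) : ℤ := (c.2 : ℤ) - c.1

theorem exists_row_not_mem (lam : YoungDiagram) (d : ℤ) :
    ∃ i : ℕ, 0 ≤ (i : ℤ) + d ∧ (i, ((i : ℤ) + d).toNat) ∉ lam := by
  refine ⟨lam.colLen 0 + d.natAbs, by omega, fun h => ?_⟩
  have h0 := lam.up_left_mem (le_refl _) (Nat.zero_le _) h
  rw [YoungDiagram.mem_iff_lt_colLen] at h0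
  omega

open scoped Classical in
/-- The height of `lam` on the diagonal of content `d`: the row of the first cell of that
diagonal which is not in `lam`.  In terms of the Maya diagram `{lam_i - i}` of `lam` it is
the number of beads exceeding `d`. -/
noncomputable def ht (lam : YoungDiagram) (d : ℤ) : ℤ :=
  (Nat.find (exists_row_not_mem lam d) : ℕ)

theorem ht_nonneg (lam : YoungDiagram) (d : ℤ) : 0 ≤ ht lam d := by
  unfold ht; positivity

theorem ht_add_nonneg (lam : YoungDiagram) (d : ℤ) : 0 ≤ ht lam d + d := by
  classical
  exact (Nat.find_spec (exists_row_not_mem lam d)).1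

theorem mem_iff_ht (lam : YoungDiagram) (c : ℕ × ℕ) : c ∈ lam ↔ (c.1 : ℤ) < ht lam (ct c) := by
  classical
  obtain ⟨i, j⟩ := c
  have hs := Nat.find_spec (exists_row_not_mem lam (ct (i, j)))
  have hm := @Nat.find_min _ _ (exists_row_not_mem lam (ct (i, j))) i
  unfold ht
  generalize Nat.find (exists_row_not_mem lam (ct (i, j))) = m at *
  simp only [ct] at *
  constructor
  · intro h
    by_contra hle
    exact hs.2 (lam.up_left_mem (by omega) (by omega) h)
  · intro h
    have := hm (by omega)
    have e : ((i : ℤ) + ((j : ℤ) - i)).toNat = j := by omega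
    rw [e] at this
    by_contra h'
    exact this ⟨by omega, h'⟩

theorem ht_le_iff (lam : YoungDiagram) (d : ℤ) (i j : ℕ) (h : (j : ℤ) - i = d) :
    ht lam d ≤ i ↔ (i, j) ∉ lam := by
  rw [mem_iff_ht]; simp [ct, h]

theorem ht_step (lam : YoungDiagram) (d : ℤ) :
    ht lam (d + 1) ≤ ht lam d ∧ ht lam d ≤ ht lam (d + 1) + 1 := by
  have h0 := ht_nonneg lam d
  have h1 := ht_nonneg lam (d + 1)
  have h2 := ht_add_nonneg lam d
  have h3 := ht_add_nonneg lam (d + 1)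
  obtain ⟨a, ha⟩ := Int.eq_ofNat_of_zero_le h0
  obtain ⟨b, hb⟩ := Int.eq_ofNat_of_zero_le h1
  obtain ⟨a', ha'⟩ := Int.eq_ofNat_of_zero_le h2
  obtain ⟨b', hb'⟩ := Int.eq_ofNat_of_zero_le h3
  constructor
  · rw [ha, ht_le_iff lam (d + 1) a (a' + 1) (by push_cast; omega)]
    exact fun h => (ht_le_iff lam d a a' (by omega)).1 ha.le
      (lam.up_left_mem le_rfl (by omega) h)
  · rw [hb]
    have := (ht_le_iff lam d (b + 1) b' (by push_cast; omega)).2 fun h =>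
      (ht_le_iff lam (d + 1) b b' (by omega)).1 hb.le (lam.up_left_mem (by omega) le_rfl h)
    push_cast at this
    exact this

theorem ht_inj {lam ν : YoungDiagram} (h : ∀ d, ht lam d = ht ν d) : lam = ν := by
  ext c
  rw [YoungDiagram.mem_cells, YoungDiagram.mem_cells, mem_iff_ht, mem_iff_ht, h]

theorem ht_mono {lam ν : YoungDiagram} (h : lam ≤ ν) (d : ℤ) : ht lam d ≤ ht ν d := by
  obtain ⟨a, ha⟩ := Int.eq_ofNat_of_zero_le (ht_nonneg ν d)
  obtain ⟨a', ha'⟩ := Int.eq_ofNat_of_zero_le (ht_add_nonneg ν d)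
  rw [ha, ht_le_iff lam d a a' (by omega)]
  exact fun hm => (ht_le_iff ν d a a' (by omega)).1 ha.le (h hm)

theorem le_of_ht {lam ν : YoungDiagram} (h : ∀ d, ht lam d ≤ ht ν d) : lam ≤ ν := by
  intro c hc
  have hc' : c ∈ lam := hc
  rw [mem_iff_ht] at *
  exact hc'.trans_le (h _)

/-- A function with steps `0` and `-1` which exceeds `ht lam` in finitely many places only
is the height function of a Young diagram. -/
theorem exists_ht_eq (lam : YoungDiagram) (g : ℤ → ℤ) (a b : ℤ)
    (hg : ∀ d, g (d + 1) ≤ g d ∧ g d ≤ g (d + 1) + 1) (hle : ∀ d, ht lam d ≤ g d)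
    (hab : ∀ d, ht lam d ≠ g d → a ≤ d ∧ d < b) : ∃ ν : YoungDiagram, ∀ d, ht ν d = g d := by
  classical
  have hanti : ∀ (k : ℕ) (d : ℤ), g (d + k) ≤ g d ∧ g d ≤ g (d + k) + k := by
    intro k
    induction k with
    | zero => simp
    | succ k ih =>
      intro d
      have h1 := ih d
      have h2 := hg (d + k)
      rw [add_assoc] at h2
      push_cast
      omega
  obtain ⟨C, hmem⟩ : ∃ C : Finset (ℕ × ℕ), ∀ c, c ∈ C ↔ (c.1 : ℤ) < g (ct c) := by
    refine ⟨lam.cells ∪ ((Finset.Ico a b).biUnion fun d =>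
      (Finset.range (g d).toNat).biUnion fun i =>
        if 0 ≤ (i : ℤ) + d then {(i, ((i : ℤ) + d).toNat)} else ∅), ?_⟩
    intro c
    rw [Finset.mem_union, YoungDiagram.mem_cells, mem_iff_ht]
    simp only [Finset.mem_biUnion, Finset.mem_Ico, Finset.mem_range]
    constructor
    · rintro (h | ⟨d, hd, i, hi, h⟩)
      · exact h.trans_le (hle _)
      · split_ifs at h with h0
        · rw [Finset.mem_singleton] at h
          subst h
          have : ct (i, ((i : ℤ) + d).toNat) = d := by simp only [ct]; omega
          rw [this]
          simp only
          omega
        · simp at h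
    · intro h
      by_cases h' : ht lam (ct c) = g (ct c)
      · left; rwa [h']
      · right
        refine ⟨ct c, hab _ h', c.1, by omega, ?_⟩
        rw [if_pos (by simp only [ct]; omega), Finset.mem_singleton]
        ext
        · rfl
        · simp only [ct]; omega
  have hlow : IsLowerSet (C : Set (ℕ × ℕ)) := by
    intro c c' hcc hc
    rw [Finset.mem_coe, hmem] at hc ⊢
    obtain ⟨i, j⟩ := c
    obtain ⟨i', j'⟩ := c'
    obtain ⟨h1, h2⟩ : i' ≤ i ∧ j' ≤ j := hcc
    have e1 := (hanti (j - j') ((j' : ℤ) - i)).1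
    have e2 := (hanti (i - i') ((j' : ℤ) - i)).2
    have e3 : (j' : ℤ) - i + ((j - j' : ℕ) : ℤ) = j - i := by omega
    have e4 : (j' : ℤ) - i + ((i - i' : ℕ) : ℤ) = j' - i' := by omega
    rw [e3] at e1
    rw [e4] at e2
    simp only [ct] at hc ⊢
    omega
  obtain ⟨ν, hmem'⟩ : ∃ ν : YoungDiagram, ∀ c : ℕ × ℕ, c ∈ ν ↔ (c.1 : ℤ) < g (ct c) :=
    ⟨⟨C, hlow⟩, hmem⟩
  refine ⟨ν, fun d => ?_⟩
  have key : ∀ i j : ℕ, (j : ℤ) - i = d → ((i : ℤ) < ht ν d ↔ (i : ℤ) < g d) := by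
    intro i j h
    have := (mem_iff_ht ν (i, j)).symm.trans (hmem' (i, j))
    simpa [ct, h] using this
  have h1 := ht_nonneg ν d
  have h2 := ht_add_nonneg ν d
  have h3 := hle d
  have h4 := ht_nonneg lam d
  have h5 := ht_add_nonneg lam d
  have k1 := key (ht ν d).toNat (ht ν d + d).toNat (by omega)
  have k2 := key (g d).toNat (g d + d).toNat (by omega)
  omega

/-! ### The operators adding a ribbon -/

/-- `ν` arises from `lam` by adding a ribbon occupying the contents `p, …, p + n - 1`. -/
def IsAdd (n : ℕ) (p : ℤ) (lam ν : YoungDiagram) : Prop :=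
  ∀ d, ht ν d = ht lam d + if p ≤ d ∧ d < p + n then 1 else 0

/-- In the Maya diagram with heights `g`, there is a bead at `p` and none at `p + n`. -/
def Addable (n : ℕ) (p : ℤ) (g : ℤ → ℤ) : Prop :=
  g (p - 1) = g p + 1 ∧ g (p + n - 1) = g (p + n)

/-- Heights after moving the bead at `p` to `p + n`. -/
def addHt (n : ℕ) (p : ℤ) (g : ℤ → ℤ) (d : ℤ) : ℤ :=
  g d + if p ≤ d ∧ d < p + n then 1 else 0

/-- The spin of the ribbon added at `p`: the number of beads strictly between `p` and
`p + n`. -/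
def addSpin (n : ℕ) (p : ℤ) (g : ℤ → ℤ) : ℕ := (g p - g (p + n - 1)).toNat

theorem IsAdd.addable {n : ℕ} (hn : 1 ≤ n) {p : ℤ} {lam ν : YoungDiagram}
    (h : IsAdd n p lam ν) : Addable n p (ht lam) := by
  have a1 := h (p - 1)
  have a2 := h p
  have a3 := h (p + n - 1)
  have a4 := h (p + n)
  have b1 := ht_step lam (p - 1)
  have b2 := ht_step ν (p - 1)
  have b3 := ht_step lam (p + n - 1)
  have b4 := ht_step ν (p + n - 1)
  rw [sub_add_cancel] at b1 b2 b3 b4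
  rw [if_neg (by omega)] at a1 a4
  rw [if_pos (by omega)] at a2 a3
  constructor <;> omega

theorem exists_isAdd {n : ℕ} {p : ℤ} {lam : YoungDiagram}
    (h : Addable n p (ht lam)) : ∃ ν, IsAdd n p lam ν := by
  refine exists_ht_eq lam (addHt n p (ht lam)) p (p + n) (fun d => ?_) (fun d => ?_) fun d => ?_
  · obtain ⟨h1, h2⟩ := h
    have h3 := ht_step lam d
    unfold addHt
    by_cases e1 : d = p - 1
    · subst e1
      rw [sub_add_cancel] at *
      split_ifs <;> omega
    · by_cases e2 : d = p + n - 1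
      · subst e2
        rw [sub_add_cancel] at *
        split_ifs <;> omega
      · split_ifs <;> omega
  · unfold addHt; split_ifs <;> omega
  · unfold addHt; split_ifs <;> omega

theorem IsAdd.unique {n : ℕ} {p : ℤ} {lam ν ν' : YoungDiagram} (h : IsAdd n p lam ν)
    (h' : IsAdd n p lam ν') : ν = ν' := ht_inj fun d => by rw [h d, h' d]

theorem IsAdd.unique_left {n : ℕ} {p : ℤ} {lam lam' ν : YoungDiagram} (h : IsAdd n p lam ν)
    (h' : IsAdd n p lam' ν) : lam = lam' := ht_inj fun d => by
  have := h d
  rw [h' d] at this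
  omega

section Operators

variable {R : Type*} [CommRing R]

open scoped Classical in
/-- The ribbon-adding operator on the free module on Young diagrams: it adds the ribbon of
contents `p, …, p + n - 1` with weight `q ^ spin`, or gives `0` if this is impossible. -/
noncomputable def addOp (n : ℕ) (q : R) (p : ℤ) : Module.End R (YoungDiagram →₀ R) :=
  Finsupp.linearCombination R fun lam =>
    if h : ∃ ν, IsAdd n p lam ν then
      Finsupp.single h.choose (q ^ addSpin n p (ht lam)) else 0

theorem addOp_single {n : ℕ} {q : R} {p : ℤ} {lam ν : YoungDiagram} (h : IsAdd n p lam ν)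
    (c : R) : addOp n q p (Finsupp.single lam c) =
      Finsupp.single ν (c * q ^ addSpin n p (ht lam)) := by
  have he : ∃ ν, IsAdd n p lam ν := ⟨ν, h⟩
  rw [addOp, Finsupp.linearCombination_single, dif_pos he, he.choose_spec.unique h,
    Finsupp.smul_single, smul_eq_mul]

theorem addOp_single_of_not {n : ℕ} (hn : 1 ≤ n) {q : R} {p : ℤ} {lam : YoungDiagram}
    (h : ¬Addable n p (ht lam)) (c : R) : addOp n q p (Finsupp.single lam c) = 0 := by
  rw [addOp, Finsupp.linearCombination_single, dif_neg, smul_zero]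
  rintro ⟨ν, hν⟩
  exact h (hν.addable hn)

/-- The moves at the positions of the list are possible one after the other. -/
def PathAddable (n : ℕ) : List ℤ → (ℤ → ℤ) → Prop
  | [], _ => True
  | p :: l, g => Addable n p g ∧ PathAddable n l (addHt n p g)

/-- Heights after the moves of the list, applied from its head on. -/
def pathHt (n : ℕ) : List ℤ → (ℤ → ℤ) → ℤ → ℤ
  | [], g => g
  | p :: l, g => pathHt n l (addHt n p g)

/-- Total spin of the moves of the list. -/
def pathSpin (n : ℕ) : List ℤ → (ℤ → ℤ) → ℕ
  | [], _ => 0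
  | p :: l, g => addSpin n p g + pathSpin n l (addHt n p g)

/-- The composite of the ribbon-adding operators of the list, the head acting first. -/
noncomputable def pathOp (n : ℕ) (q : R) : List ℤ → Module.End R (YoungDiagram →₀ R)
  | [] => 1
  | p :: l => pathOp n q l * addOp n q p

theorem pathOp_single {n : ℕ} (q : R) (l : List ℤ) (lam : YoungDiagram) (c : R)
    (h : PathAddable n l (ht lam)) : ∃ ν, ht ν = pathHt n l (ht lam) ∧
      pathOp n q l (Finsupp.single lam c) =
        Finsupp.single ν (c * q ^ pathSpin n l (ht lam)) := by
  induction l generalizing lam c with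
  | nil => exact ⟨lam, rfl, by simp [pathOp, pathSpin]⟩
  | cons p l ih =>
    obtain ⟨ν, hν⟩ := exists_isAdd h.1
    have e : ht ν = addHt n p (ht lam) := funext hν
    obtain ⟨κ, h1, h2⟩ := ih ν (c * q ^ addSpin n p (ht lam)) (e ▸ h.2)
    refine ⟨κ, by rw [h1, e]; rfl, ?_⟩
    rw [pathOp, Module.End.mul_apply, addOp_single hν, h2, pathSpin, pow_add, mul_assoc, e]

theorem pathOp_single_of_not {n : ℕ} (hn : 1 ≤ n) (q : R) (l : List ℤ) (lam : YoungDiagram)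
    (c : R) (h : ¬PathAddable n l (ht lam)) : pathOp n q l (Finsupp.single lam c) = 0 := by
  induction l generalizing lam c with
  | nil => exact absurd trivial h
  | cons p l ih =>
    rw [pathOp, Module.End.mul_apply]
    by_cases hp : Addable n p (ht lam)
    · obtain ⟨ν, hν⟩ := exists_isAdd hp
      have e : ht ν = addHt n p (ht lam) := funext hν
      rw [addOp_single hν]
      exact ih ν _ fun h' => h ⟨hp, e ▸ h'⟩
    · rw [addOp_single_of_not hn hp, map_zero]

/-- A relation between two composites of ribbon-adding operators reduces to a comparison of
height functions. -/
theorem pathOp_eq {n : ℕ} (hn : 1 ≤ n) (q : R) (l l' : List ℤ) (k : ℕ)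
    (h : ∀ g : ℤ → ℤ, (∀ d e, d ≤ e → g e ≤ g d) → (PathAddable n l g ↔ PathAddable n l' g) ∧
      (PathAddable n l g → pathHt n l g = pathHt n l' g ∧
        pathSpin n l g = pathSpin n l' g + k)) :
    pathOp n q l = q ^ k • pathOp n q l' := by
  refine Finsupp.lhom_ext fun lam c => ?_
  have hmono : ∀ d e, d ≤ e → ht lam e ≤ ht lam d := fun d e hde =>
    (antitone_int_of_succ_le fun d => (ht_step lam d).1) hde
  obtain ⟨h1, h2⟩ := h (ht lam) hmono
  rw [LinearMap.smul_apply]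
  by_cases hp : PathAddable n l (ht lam)
  · obtain ⟨ν, e1, e2⟩ := pathOp_single q l lam c hp
    obtain ⟨ν', e1', e2'⟩ := pathOp_single q l' lam c (h1.1 hp)
    have : ν = ν' := ht_inj fun d => by rw [e1, e1', (h2 hp).1]
    rw [e2, e2', this, (h2 hp).2, Finsupp.smul_single, smul_eq_mul, pow_add]
    congr 1
    ring
  · rw [pathOp_single_of_not hn q l lam c hp,
      pathOp_single_of_not hn q l' lam c fun h => hp (h1.2 h), smul_zero]

theorem pathOp_eq_zero {n : ℕ} (hn : 1 ≤ n) (q : R) (l : List ℤ)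
    (h : ∀ g : ℤ → ℤ, ¬PathAddable n l g) : pathOp n q l = 0 := by
  refine Finsupp.lhom_ext fun lam c => ?_
  rw [pathOp_single_of_not hn q l lam c (h _), LinearMap.zero_apply]

theorem addOp_ribbonRel {n : ℕ} (hn : 1 ≤ n) (q : R) (N : ℕ) :
    RibbonRel n (q ^ 2) fun i : ℕ => addOp n q ((i : ℤ) - N) := by
  constructor
  · intro i
    have := pathOp_eq_zero hn q [(i : ℤ) - N, (i : ℤ) - N] fun g => ?_
    · simpa [pathOp] using this
    · generalize (i : ℤ) - N = p
      simp (disch := omega) only [PathAddable, Addable, addHt, if_pos, if_neg]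
      omega
  · intro i j hij
    have := pathOp_eq hn q [(j : ℤ) - N, (i : ℤ) - N] [(i : ℤ) - N, (j : ℤ) - N] 0 fun g hg => ?_
    · simpa [pathOp] using this
    · obtain ⟨p, hp⟩ : ∃ p, p = (i : ℤ) - N := ⟨_, rfl⟩
      obtain ⟨p', hp'⟩ : ∃ p, p = (j : ℤ) - N := ⟨_, rfl⟩
      rw [← hp, ← hp']
      have hpp : p + n < p' := by omega
      clear hp hp' hij
      simp (disch := omega) only [PathAddable, Addable, addHt, if_neg, pathSpin, addSpin]
      refine ⟨by simp only [and_true]; constructor <;> intro h <;> omega,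
        fun h => ⟨funext fun d => ?_, by omega⟩⟩
      simp only [pathHt, addHt]
      omega
  · intro i j hij hji
    have := pathOp_eq hn q [(i : ℤ) - N, (j : ℤ) - N] [(j : ℤ) - N, (i : ℤ) - N] 2 fun g hg => ?_
    · simpa [pathOp] using this
    · obtain ⟨p, hp⟩ : ∃ p, p = (i : ℤ) - N := ⟨_, rfl⟩
      obtain ⟨p', hp'⟩ : ∃ p, p = (j : ℤ) - N := ⟨_, rfl⟩
      rw [← hp, ← hp']
      have hpp : p < p' := by omega
      have hpp' : p' < p + n := by omega
      clear hp hp' hij hji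
      simp (disch := omega) only [PathAddable, Addable, addHt, if_pos, if_neg, pathSpin, addSpin]
      refine ⟨by simp only [and_true]; constructor <;> intro h <;> omega,
        fun h => ⟨funext fun d => ?_, ?_⟩⟩
      · simp only [pathHt, addHt]
        omega
      · have h1 := hg p (p + n - 1) (by omega)
        have h2 := hg p' (p' + n - 1) (by omega)
        have h3 := hg p (p' - 1) (by omega)
        have h4 := hg p' (p + n - 1) (by omega)
        have h5 := hg (p + n) (p' + n - 1) (by omega)
        omega
  · intro i
    have := pathOp_eq_zero hn q [(i : ℤ) - N, (i : ℤ) - N + n, (i : ℤ) - N] fun g => ?_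
    · simpa [pathOp, mul_assoc, add_sub_right_comm] using this
    · generalize (i : ℤ) - N = p
      simp (disch := omega) only [PathAddable, Addable, addHt, if_pos, if_neg]
      omega
  · intro i
    have := pathOp_eq_zero hn q [(i : ℤ) - N + n, (i : ℤ) - N, (i : ℤ) - N + n] fun g => ?_
    · simpa [pathOp, mul_assoc, add_sub_right_comm] using this
    · generalize (i : ℤ) - N = p
      simp (disch := omega) only [PathAddable, Addable, addHt, if_pos, if_neg]
      omega
  · intro i j hij hji
    have := pathOp_eq hn q [(i : ℤ) - N, (i : ℤ) - N + n, (j : ℤ) - N]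
      [(j : ℤ) - N, (i : ℤ) - N, (i : ℤ) - N + n] 0 fun g hg => ?_
    · simpa [pathOp, mul_assoc, add_sub_right_comm] using this
    · obtain ⟨p, hp⟩ : ∃ p, p = (i : ℤ) - N := ⟨_, rfl⟩
      obtain ⟨p', hp'⟩ : ∃ p, p = (j : ℤ) - N := ⟨_, rfl⟩
      rw [← hp, ← hp']
      have hpp : p < p' := by omega
      have hpp' : p' < p + n := by omega
      clear hp hp' hij hji
      simp (disch := omega) only [PathAddable, Addable, addHt, if_pos, if_neg, pathSpin, addSpin]
      refine ⟨by simp only [and_true]; constructor <;> intro h <;> omega,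
        fun h => ⟨funext fun d => ?_, ?_⟩⟩
      · simp only [pathHt, addHt]
        omega
      · have h1 := hg p (p + n - 1) (by omega)
        have h2 := hg p' (p' + n - 1) (by omega)
        have h3 := hg p (p' - 1) (by omega)
        have h4 := hg p' (p + n - 1) (by omega)
        have h5 := hg (p + n) (p' + n - 1) (by omega)
        have h6 := hg (p' + n) (p + n + n - 1) (by omega)
        omega

end Operators

/-! ### Ribbons and their contents -/

theorem Adj.symm {a b : ℕ × ℕ} (h : Adj a b) : Adj b a := by
  unfold Adj at *; omega

theorem Adj.ct_eq {a b : ℕ × ℕ} (h : Adj a b) : ct b = ct a + 1 ∨ ct a = ct b + 1 := by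
  unfold Adj ct at *; omega

/-- What is used about ribbons: they meet every diagonal at most once, the contents fill an
interval of length `n`, and along increasing content the cells go right or up. -/
structure RibbonFacts (n : ℕ) (t : Finset (ℕ × ℕ)) (p : ℤ) : Prop where
  uniq : ∀ x ∈ t, ∀ y ∈ t, ct x = ct y → x = y
  mem_contents : ∀ x ∈ t, p ≤ ct x ∧ ct x < p + n
  exists_mem : ∀ d, p ≤ d → d < p + n → ∃ x ∈ t, ct x = d
  step : ∀ x ∈ t, ∀ y ∈ t, ct y = ct x + 1 →
    (y.1 = x.1 ∧ y.2 = x.2 + 1) ∨ (y.1 + 1 = x.1 ∧ y.2 = x.2)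

theorem exists_cross {t : Finset (ℕ × ℕ)} {c d : ℕ × ℕ}
    (h : Relation.ReflTransGen (fun a b => a ∈ t ∧ b ∈ t ∧ Adj a b) c d) (e : ℤ)
    (hc : ct c ≤ e) (hd : e < ct d) : ∃ a ∈ t, ∃ b ∈ t, Adj a b ∧ ct a = e ∧ ct b = e + 1 := by
  induction h with
  | refl => omega
  | @tail b d _ hbd ih =>
    by_cases hb : e < ct b
    · exact ih hb
    · have := hbd.2.2.ct_eq
      exact ⟨b, hbd.1, d, hbd.2.1, hbd.2.2, by omega, by omega⟩

theorem IsSkewCells.convex {t : Finset (ℕ × ℕ)} (h : IsSkewCells t) {x y z : ℕ × ℕ}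
    (hx : x ∈ t) (hz : z ∈ t) (hxy : x ≤ y) (hyz : y ≤ z) : y ∈ t := by
  obtain ⟨μ, lam, -, rfl⟩ := h
  rw [Finset.mem_sdiff] at *
  exact ⟨lam.isLowerSet hyz hz.1, fun hy => hx.2 (μ.isLowerSet hxy hy)⟩

theorem IsRibbon.facts {n : ℕ} (hn : 1 ≤ n) {t : Finset (ℕ × ℕ)} (h : IsRibbon n t) :
    ∃ p, RibbonFacts n t p := by
  obtain ⟨hcard, hskew, hconn, hsq⟩ := h
  have key : ∀ x ∈ t, ∀ y ∈ t, ct x = ct y → ¬x.1 < y.1 := by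
    rintro ⟨i, j⟩ hx ⟨i', j'⟩ hy hxy hlt
    simp only [ct] at hxy hlt
    refine hsq i j ⟨hx, hskew.convex hx hy ?_ ?_, hskew.convex hx hy ?_ ?_,
      hskew.convex hx hy ?_ ?_⟩ <;> rw [Prod.mk_le_mk] <;> omega
  have uniq : ∀ x ∈ t, ∀ y ∈ t, ct x = ct y → x = y := by
    intro x hx y hy hxy
    have h1 := key x hx y hy hxy
    have h2 := key y hy x hx hxy.symm
    simp only [ct] at hxy
    ext <;> omega
  have hne : t.Nonempty := by rw [← Finset.card_pos]; omega
  have hne' : (t.image ct).Nonempty := hne.image _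
  obtain ⟨a, ha, hap⟩ := Finset.mem_image.1 ((t.image ct).min'_mem hne')
  obtain ⟨b, hb, hbp⟩ := Finset.mem_image.1 ((t.image ct).max'_mem hne')
  have hmin : ∀ x ∈ t, ct a ≤ ct x := fun x hx => by
    rw [hap]; exact Finset.min'_le _ _ (Finset.mem_image_of_mem _ hx)
  have hmax : ∀ x ∈ t, ct x ≤ ct b := fun x hx => by
    rw [hbp]; exact Finset.le_max' _ _ (Finset.mem_image_of_mem _ hx)
  have himg : t.image ct = Finset.Icc (ct a) (ct b) := by
    ext d
    rw [Finset.mem_image, Finset.mem_Icc]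
    constructor
    · rintro ⟨x, hx, rfl⟩
      exact ⟨hmin x hx, hmax x hx⟩
    · rintro ⟨h1, h2⟩
      rcases h2.lt_or_eq with h2 | h2
      · obtain ⟨x, hx, -, -, -, h, -⟩ := exists_cross (hconn a ha b hb) d h1 h2
        exact ⟨x, hx, h⟩
      · exact ⟨b, hb, h2.symm⟩
  have hc : (t.image ct).card = n := by
    rw [Finset.card_image_of_injOn (fun x hx y hy => uniq x hx y hy), hcard]
  rw [himg, Int.card_Icc] at hc
  have hb' : ct b = ct a + n - 1 := by have := hmin b hb; omega
  refine ⟨ct a, uniq, fun x hx => ⟨hmin x hx, by have := hmax x hx; omega⟩, fun d h1 h2 => ?_, ?_⟩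
  · have : d ∈ t.image ct := by rw [himg, Finset.mem_Icc]; omega
    exact Finset.mem_image.1 this
  · intro x hx y hy hxy
    obtain ⟨x', hx', y', hy', hadj, h1, h2⟩ :=
      exists_cross (hconn x hx y hy) (ct x) le_rfl (by omega)
    rw [uniq x' hx' x hx h1, uniq y' hy' y hy (by omega)] at hadj
    simp only [Adj, ct] at *
    omega

namespace RibbonFacts

variable {n : ℕ} {t : Finset (ℕ × ℕ)} {p : ℤ}

theorem mono (h : RibbonFacts n t p) {x y : ℕ × ℕ} (hx : x ∈ t) (hy : y ∈ t)
    (hxy : ct x ≤ ct y) : y.1 ≤ x.1 ∧ x.2 ≤ y.2 := by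
  obtain ⟨k, hk⟩ := Int.eq_ofNat_of_zero_le (sub_nonneg.2 hxy)
  induction k generalizing y with
  | zero => rw [h.uniq x hx y hy (by omega)]; simp
  | succ k ih =>
    have h1 := h.mem_contents x hx
    have h2 := h.mem_contents y hy
    obtain ⟨z, hz, hzc⟩ := h.exists_mem (ct y - 1) (by omega) (by omega)
    have h3 := ih hz (by omega) (by omega)
    have h4 := h.step z hz y hy (by omega)
    omega

theorem topRight_eq (h : RibbonFacts n t p) {x : ℕ × ℕ} (hx : x ∈ t)
    (hmax : ∀ y ∈ t, ct y ≤ ct x) : topRight t = x := by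
  have h1 : (t.image Prod.fst).min = (x.1 : WithTop ℕ) := by
    apply le_antisymm
    · exact Finset.min_le (Finset.mem_image_of_mem _ hx)
    · refine Finset.le_min fun b hb => ?_
      obtain ⟨y, hy, rfl⟩ := Finset.mem_image.1 hb
      exact WithTop.coe_le_coe.2 (h.mono hy hx (hmax y hy)).1
  have e1 : (t.image Prod.fst).min.getD 0 = x.1 := by rw [h1]; rfl
  have h2 : ((t.filter fun c => c.1 = x.1).image Prod.snd).max = (x.2 : WithBot ℕ) := by
    apply le_antisymm
    · refine Finset.max_le fun b hb => ?_
      obtain ⟨y, hy, rfl⟩ := Finset.mem_image.1 hb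
      rw [Finset.mem_filter] at hy
      exact WithBot.coe_le_coe.2 (h.mono hy.1 hx (hmax y hy.1)).2
    · exact Finset.le_max (Finset.mem_image_of_mem _ (Finset.mem_filter.2 ⟨hx, rfl⟩))
  unfold topRight
  rw [e1, h2]
  rfl

theorem bottomLeft_eq (h : RibbonFacts n t p) {x : ℕ × ℕ} (hx : x ∈ t)
    (hmin : ∀ y ∈ t, ct x ≤ ct y) : bottomLeft t = x := by
  have h1 : (t.image Prod.fst).max = (x.1 : WithBot ℕ) := by
    apply le_antisymm
    · refine Finset.max_le fun b hb => ?_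
      obtain ⟨y, hy, rfl⟩ := Finset.mem_image.1 hb
      exact WithBot.coe_le_coe.2 (h.mono hx hy (hmin y hy)).1
    · exact Finset.le_max (Finset.mem_image_of_mem _ hx)
  have e1 : (t.image Prod.fst).max.getD 0 = x.1 := by rw [h1]; rfl
  have h2 : ((t.filter fun c => c.1 = x.1).image Prod.snd).min = (x.2 : WithTop ℕ) := by
    apply le_antisymm
    · exact Finset.min_le (Finset.mem_image_of_mem _ (Finset.mem_filter.2 ⟨hx, rfl⟩))
    · refine Finset.le_min fun b hb => ?_
      obtain ⟨y, hy, rfl⟩ := Finset.mem_image.1 hb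
      rw [Finset.mem_filter] at hy
      exact WithTop.coe_le_coe.2 (h.mono hx hy.1 (hmin y hy.1)).2
  unfold bottomLeft
  rw [e1, h2]
  rfl

end RibbonFacts

/-- Removing a ribbon from a Young diagram lowers the heights by one on its contents. -/
theorem RibbonFacts.isAdd {n : ℕ} {p : ℤ} {μ lam : YoungDiagram} (hle : μ ≤ lam)
    (h : RibbonFacts n (lam.cells \ μ.cells) p) : IsAdd n p μ lam := by
  have hmem : ∀ c, c ∈ lam.cells \ μ.cells ↔ (c.1 : ℤ) < ht lam (ct c) ∧ ht μ (ct c) ≤ c.1 := by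
    intro c
    rw [Finset.mem_sdiff, YoungDiagram.mem_cells, YoungDiagram.mem_cells, mem_iff_ht, mem_iff_ht,
      not_lt]
  intro d
  have h1 := ht_mono hle d
  have h2 := ht_nonneg μ d
  have h3 := ht_add_nonneg μ d
  split_ifs with hd
  · obtain ⟨x, hx, hxd⟩ := h.exists_mem d hd.1 hd.2
    have hx' := (hmem x).1 hx
    rw [hxd] at hx'
    by_contra hne
    have m : ∀ k : ℕ, k < 2 →
        ((ht μ d).toNat + k, (ht μ d + d).toNat + k) ∈ lam.cells \ μ.cells ∧
        ct ((ht μ d).toNat + k, (ht μ d + d).toNat + k) = d := by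
      intro k hk
      have e : ct ((ht μ d).toNat + k, (ht μ d + d).toNat + k) = d := by
        simp only [ct]; push_cast; omega
      refine ⟨(hmem _).2 ?_, e⟩
      rw [e]
      push_cast
      omega
    have := h.uniq _ (m 0 (by omega)).1 _ (m 1 (by omega)).1
      ((m 0 (by omega)).2.trans (m 1 (by omega)).2.symm)
    simp at this
  · by_contra hne
    have e : ct ((ht μ d).toNat, (ht μ d + d).toNat) = d := by
      simp only [ct]; omega
    have m : ((ht μ d).toNat, (ht μ d + d).toNat) ∈ lam.cells \ μ.cells := by
      rw [hmem, e]
      simp only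
      omega
    have := h.mem_contents _ m
    rw [e] at this
    exact hd this

namespace IsAdd

variable {n : ℕ} {p : ℤ} {μ lam : YoungDiagram}

theorem le (h : IsAdd n p μ lam) : μ ≤ lam := le_of_ht fun d => by
  rw [h d]; split_ifs <;> omega

theorem mem_sdiff (h : IsAdd n p μ lam) (c : ℕ × ℕ) :
    c ∈ lam.cells \ μ.cells ↔ (c.1 : ℤ) = ht μ (ct c) ∧ p ≤ ct c ∧ ct c < p + n := by
  rw [Finset.mem_sdiff, YoungDiagram.mem_cells, YoungDiagram.mem_cells, mem_iff_ht, mem_iff_ht,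
      not_lt, h]
  split_ifs <;> omega

/-- The cell added on the diagonal of content `d`. -/
theorem exists_cell (μ : YoungDiagram) (d : ℤ) :
    ∃ c : ℕ × ℕ, (c.1 : ℤ) = ht μ d ∧ ct c = d := by
  have h2 := ht_nonneg μ d
  have h3 := ht_add_nonneg μ d
  refine ⟨((ht μ d).toNat, (ht μ d + d).toNat), ?_, ?_⟩ <;> simp only [ct] <;> omega

theorem facts (h : IsAdd n p μ lam) : RibbonFacts n (lam.cells \ μ.cells) p := by
  refine ⟨fun x hx y hy hxy => ?_, fun x hx => ((h.mem_sdiff x).1 hx).2, fun d h1 h2 => ?_,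
    fun x hx y hy hxy => ?_⟩
  · have e1 := ((h.mem_sdiff x).1 hx).1
    have e2 := ((h.mem_sdiff y).1 hy).1
    rw [hxy] at e1
    simp only [ct] at hxy
    ext <;> omega
  · obtain ⟨c, hc, hcd⟩ := exists_cell μ d
    exact ⟨c, (h.mem_sdiff c).2 ⟨by rw [hcd, hc], by omega⟩, hcd⟩
  · have e1 := ((h.mem_sdiff x).1 hx).1
    have e2 := ((h.mem_sdiff y).1 hy).1
    rw [hxy] at e2
    have := ht_step μ (ct x)
    simp only [ct] at *
    omega

theorem isRibbon (hn : 1 ≤ n) (h : IsAdd n p μ lam) : IsRibbon n (lam.cells \ μ.cells) := by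
  have hf := h.facts
  refine ⟨?_, ⟨μ, lam, h.le, rfl⟩, ?_, ?_⟩
  · have : (lam.cells \ μ.cells).image ct = Finset.Ico p (p + n) := by
      ext d
      rw [Finset.mem_image, Finset.mem_Ico]
      constructor
      · rintro ⟨x, hx, rfl⟩
        exact hf.mem_contents x hx
      · rintro ⟨h1, h2⟩
        exact hf.exists_mem d h1 h2
    rw [← Finset.card_image_of_injOn (fun x hx y hy => hf.uniq x hx y hy), this, Int.card_Ico]
    omega
  · set r := fun a b : ℕ × ℕ => a ∈ lam.cells \ μ.cells ∧ b ∈ lam.cells \ μ.cells ∧ Adj a b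
    have hsymm : Std.Symm r := ⟨fun a b hab => ⟨hab.2.1, hab.1, hab.2.2.symm⟩⟩
    obtain ⟨x0, hx0, hx0p⟩ := hf.exists_mem p le_rfl (by omega)
    have reach : ∀ (k : ℕ) (x : ℕ × ℕ), x ∈ lam.cells \ μ.cells → ct x = p + k →
        Relation.ReflTransGen r x0 x := by
      intro k
      induction k with
      | zero =>
        intro x hx hxk
        rw [hf.uniq x hx x0 hx0 (by simpa [hx0p] using hxk)]
      | succ k ih =>
        intro x hx hxk
        push_cast at hxk
        have hc := hf.mem_contents x hx
        obtain ⟨y, hy, hyc⟩ := hf.exists_mem (p + k) (by omega) (by omega)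
        refine (ih y hy hyc).tail ⟨hy, hx, ?_⟩
        have := hf.step y hy x hx (by omega)
        unfold Adj
        omega
    have reach' : ∀ x ∈ lam.cells \ μ.cells, Relation.ReflTransGen r x0 x := fun x hx => by
      have := hf.mem_contents x hx
      exact reach (ct x - p).toNat x hx (by omega)
    intro c hc d hd
    exact ((Relation.ReflTransGen.stdSymm (r := r)).symm _ _ (reach' c hc)).trans (reach' d hd)
  · rintro i j ⟨h1, -, -, h2⟩
    have := hf.uniq _ h1 _ h2 (by simp [ct])
    simp at this

theorem spin_eq (hn : 1 ≤ n) (h : IsAdd n p μ lam) :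
    spin (lam.cells \ μ.cells) = addSpin n p (ht μ) := by
  have hf := h.facts
  have hanti : ∀ d e, d ≤ e → ht μ e ≤ ht μ d := fun d e hde =>
    (antitone_int_of_succ_le fun d => (ht_step μ d).1) hde
  -- the rows met fill the interval between the rows of the two ends
  have hsurj : ∀ (k : ℕ) (i : ℤ), ht μ (p + k) ≤ i → i ≤ ht μ p →
      ∃ d, p ≤ d ∧ d ≤ p + k ∧ ht μ d = i := by
    intro k
    induction k with
    | zero => intro i h1 h2; exact ⟨p, by omega, by omega, by simp at h1; omega⟩
    | succ k ih =>
      intro i h1 h2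
      have hs := ht_step μ (p + k)
      rw [add_assoc] at hs
      push_cast at h1
      by_cases hi : ht μ (p + k) ≤ i
      · obtain ⟨d, hd⟩ := ih i hi h2
        exact ⟨d, hd.1, by push_cast; omega, hd.2.2⟩
      · exact ⟨p + (k + 1), by omega, by push_cast; omega, by omega⟩
  have himg : (lam.cells \ μ.cells).image Prod.fst =
      Finset.Icc (ht μ (p + n - 1)).toNat (ht μ p).toNat := by
    ext i
    rw [Finset.mem_image, Finset.mem_Icc]
    have h0 := ht_nonneg μ (p + n - 1)
    constructor
    · rintro ⟨x, hx, rfl⟩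
      obtain ⟨e, h1, h2⟩ := (h.mem_sdiff x).1 hx
      have e1 := hanti p (ct x) h1
      have e2 := hanti (ct x) (p + n - 1) (by omega)
      omega
    · rintro ⟨h1, h2⟩
      have e : p + ((n - 1 : ℕ) : ℤ) = p + n - 1 := by omega
      have h3 := ht_nonneg μ p
      obtain ⟨d, hd1, hd2, hd3⟩ := hsurj (n - 1) i (by rw [e]; omega) (by omega)
      obtain ⟨c, hc, hcd⟩ := exists_cell μ d
      exact ⟨c, (h.mem_sdiff c).2 ⟨by rw [hcd, hc], by omega⟩, by omega⟩
  unfold spin addSpin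
  rw [himg, Nat.card_Icc]
  have h0 := ht_nonneg μ (p + n - 1)
  have h1 := hanti p (p + n - 1) (by omega)
  omega

end IsAdd

/-! ### Removing and adding the last ribbon of a strip -/

/-- `D` tiles `lam / ν` as a horizontal (`b = true`) or vertical (`b = false`) ribbon strip. -/
structure IsStrip (n : ℕ) (b : Bool) (ν lam : YoungDiagram) (D : Finset (Finset (ℕ × ℕ))) :
    Prop where
  le : ν ≤ lam
  ribbon : ∀ t ∈ D, IsRibbon n t
  disj : ∀ t ∈ D, ∀ t' ∈ D, t ≠ t' → Disjoint t t'
  sup_eq : D.sup id = lam.cells \ ν.cells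
  north : b = true → ∀ t ∈ D, TouchesNorth (lam.cells \ ν.cells) (topRight t)
  west : b = false → ∀ t ∈ D, TouchesWest (lam.cells \ ν.cells) (bottomLeft t)

/-- Two disjoint ribbons do not cross: the one further north-west on one common diagonal is
so on every common diagonal. -/
theorem RibbonFacts.noncross {n : ℕ} {t t' : Finset (ℕ × ℕ)} {p p' : ℤ}
    (h : RibbonFacts n t p) (h' : RibbonFacts n t' p') (hd : Disjoint t t')
    {x y x' y' : ℕ × ℕ} (hx : x ∈ t) (hy : y ∈ t') (hxy : ct x = ct y) (hlt : x.1 < y.1)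
    (hx' : x' ∈ t) (hy' : y' ∈ t') (hxy' : ct x' = ct y') : x'.1 < y'.1 := by
  have hne : ∀ {a b}, a ∈ t → b ∈ t' → ct a = ct b → a.1 ≠ b.1 := by
    intro a b ha hb hab e
    have : a = b := by simp only [ct] at hab; ext <;> omega
    exact Finset.disjoint_left.1 hd ha (this ▸ hb)
  have b1 := h.mem_contents x hx
  have b2 := h'.mem_contents y hy
  have b1' := h.mem_contents x' hx'
  have b2' := h'.mem_contents y' hy'
  obtain ⟨k, hk⟩ : ∃ k : ℕ, ct x' = ct x + k ∨ ct x' = ct x - k :=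
    ⟨(ct x' - ct x).natAbs, by omega⟩
  induction k generalizing x' y' with
  | zero =>
    rw [← h.uniq x hx x' hx' (by omega), ← h'.uniq y hy y' hy' (by omega)]
    exact hlt
  | succ k ih =>
    have hn := hne hx' hy' hxy'
    rcases hk with hk | hk
    · obtain ⟨a, ha, hac⟩ := h.exists_mem (ct x' - 1) (by omega) (by omega)
      obtain ⟨b, hb, hbc⟩ := h'.exists_mem (ct x' - 1) (by omega) (by omega)
      have i1 := ih ha hb (by omega) (h.mem_contents a ha) (h'.mem_contents b hb) (by omega)
      have i2 := h.step a ha x' hx' (by omega)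
      have i3 := h'.step b hb y' hy' (by omega)
      omega
    · obtain ⟨a, ha, hac⟩ := h.exists_mem (ct x' + 1) (by omega) (by omega)
      obtain ⟨b, hb, hbc⟩ := h'.exists_mem (ct x' + 1) (by omega) (by omega)
      have i1 := ih ha hb (by omega) (h.mem_contents a ha) (h'.mem_contents b hb) (by omega)
      have i2 := h.step x' hx' a ha (by omega)
      have i3 := h'.step y' hy' b hb (by omega)
      simp only [ct] at *
      omega

theorem RibbonFacts.exists_head {n : ℕ} (hn : 1 ≤ n) {t : Finset (ℕ × ℕ)} {p : ℤ}
    (h : RibbonFacts n t p) : ∃ y ∈ t, ct y = p + n - 1 ∧ topRight t = y := by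
  obtain ⟨y, hy, hyc⟩ := h.exists_mem (p + n - 1) (by omega) (by omega)
  exact ⟨y, hy, hyc, h.topRight_eq hy fun z hz => by have := h.mem_contents z hz; omega⟩

theorem RibbonFacts.exists_tail {n : ℕ} (hn : 1 ≤ n) {t : Finset (ℕ × ℕ)} {p : ℤ}
    (h : RibbonFacts n t p) : ∃ y ∈ t, ct y = p ∧ bottomLeft t = y := by
  obtain ⟨y, hy, hyc⟩ := h.exists_mem p (by omega) (by omega)
  exact ⟨y, hy, hyc, h.bottomLeft_eq hy fun z hz => by have := h.mem_contents z hz; omega⟩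

namespace IsStrip

variable {n : ℕ} {b : Bool} {ν lam : YoungDiagram} {D : Finset (Finset (ℕ × ℕ))}

theorem mem_iff (h : IsStrip n b ν lam D) (x : ℕ × ℕ) :
    x ∈ lam.cells \ ν.cells ↔ ∃ t ∈ D, x ∈ t := by
  rw [← h.sup_eq, Finset.mem_sup]; rfl

theorem skew (h : IsStrip n b ν lam D) : IsSkewCells (lam.cells \ ν.cells) :=
  ⟨ν, lam, h.le, rfl⟩

/-- In a horizontal strip, no cell lies north-west of the head of a ribbon. -/
theorem head_north (h : IsStrip n true ν lam D) {t : Finset (ℕ × ℕ)} (ht : t ∈ D)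
    {y : ℕ × ℕ} (hy : y ∈ t) (hyh : topRight t = y) {x : ℕ × ℕ}
    (hx : x ∈ lam.cells \ ν.cells) (h1 : x.1 < y.1) (h2 : x.2 ≤ y.2) : False := by
  have hn := h.north rfl t ht
  rw [hyh] at hn
  rcases hn with hn | hn
  · omega
  · refine hn (h.skew.convex hx ((h.mem_iff y).2 ⟨t, ht, hy⟩) ?_ ?_)
    · exact Prod.le_def.2 ⟨by simp only; omega, h2⟩
    · exact Prod.le_def.2 ⟨by simp only; omega, le_rfl⟩

/-- In a vertical strip, no cell lies north-west of the tail of a ribbon. -/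
theorem tail_west (h : IsStrip n false ν lam D) {t : Finset (ℕ × ℕ)} (ht : t ∈ D)
    {y : ℕ × ℕ} (hy : y ∈ t) (hyh : bottomLeft t = y) {x : ℕ × ℕ}
    (hx : x ∈ lam.cells \ ν.cells) (h1 : x.1 ≤ y.1) (h2 : x.2 < y.2) : False := by
  have hn := h.west rfl t ht
  rw [hyh] at hn
  rcases hn with hn | hn
  · omega
  · refine hn (h.skew.convex hx ((h.mem_iff y).2 ⟨t, ht, hy⟩) ?_ ?_)
    · exact Prod.le_def.2 ⟨h1, by simp only; omega⟩
    · exact Prod.le_def.2 ⟨le_rfl, by simp only; omega⟩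

/-- A tile without neighbours of other tiles to its right or below can be removed. -/
theorem erase (h : IsStrip n b ν lam D) {t : Finset (ℕ × ℕ)} (ht : t ∈ D)
    (hcl : ∀ t' ∈ D, t' ≠ t → ∀ x ∈ t, ∀ y ∈ t',
      ¬((y.1 = x.1 ∧ y.2 = x.2 + 1) ∨ (y.1 = x.1 + 1 ∧ y.2 = x.2))) :
    ∃ κ : YoungDiagram, κ ≤ lam ∧ lam.cells \ κ.cells = t ∧ IsStrip n b ν κ (D.erase t) := by
  have htsub : t ⊆ lam.cells \ ν.cells := fun x hx => (h.mem_iff x).2 ⟨t, ht, hx⟩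
  have hcl' : ∀ x ∈ t, ∀ y ∈ lam.cells,
      ((y.1 = x.1 ∧ y.2 = x.2 + 1) ∨ (y.1 = x.1 + 1 ∧ y.2 = x.2)) → y ∈ t := by
    intro x hx y hy hxy
    have hyν : y ∉ ν.cells := fun hyν => (Finset.mem_sdiff.1 (htsub hx)).2
      (ν.isLowerSet (Prod.le_def.2 (by omega)) hyν)
    obtain ⟨t', ht', hyt'⟩ := (h.mem_iff y).1 (Finset.mem_sdiff.2 ⟨hy, hyν⟩)
    by_cases e : t' = t
    · rwa [e] at hyt'
    · exact absurd hxy (hcl t' ht' e x hx y hyt')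
  have hup : ∀ (k : ℕ) (x y : ℕ × ℕ), x ∈ t → y ∈ lam.cells → x ≤ y →
      y.1 + y.2 = x.1 + x.2 + k → y ∈ t := by
    intro k
    induction k with
    | zero =>
      intro x y hx _ hxy hk
      obtain ⟨h1, h2⟩ := Prod.le_def.1 hxy
      have : x = y := by ext <;> omega
      rwa [← this]
    | succ k ih =>
      intro x y hx hy hxy hk
      obtain ⟨h1, h2⟩ := Prod.le_def.1 hxy
      by_cases e : x.1 < y.1
      · have hm : (y.1 - 1, y.2) ∈ lam.cells := lam.isLowerSet
          (show (y.1 - 1, y.2) ≤ y from Prod.le_def.2 ⟨Nat.sub_le _ _, le_rfl⟩) hy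
        have := ih x (y.1 - 1, y.2) hx hm (Prod.le_def.2 ⟨by simp only; omega, h2⟩)
          (by simp only; omega)
        exact hcl' _ this y hy (Or.inr ⟨by simp only; omega, rfl⟩)
      · have hm : (y.1, y.2 - 1) ∈ lam.cells := lam.isLowerSet
          (show (y.1, y.2 - 1) ≤ y from Prod.le_def.2 ⟨le_rfl, Nat.sub_le _ _⟩) hy
        have := ih x (y.1, y.2 - 1) hx hm (Prod.le_def.2 ⟨h1, by simp only; omega⟩)
          (by simp only; omega)
        exact hcl' _ this y hy (Or.inl ⟨rfl, by simp only; omega⟩)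
  obtain ⟨κ, hκ⟩ : ∃ κ : YoungDiagram, κ.cells = lam.cells \ t := by
    refine ⟨⟨lam.cells \ t, fun y x hxy hy => ?_⟩, rfl⟩
    rw [Finset.mem_coe, Finset.mem_sdiff] at *
    refine ⟨lam.isLowerSet hxy hy.1, fun hx => hy.2 ?_⟩
    obtain ⟨h1, h2⟩ := Prod.le_def.1 hxy
    exact hup (y.1 + y.2 - (x.1 + x.2)) x y hx hy.1 hxy (by omega)
  have hκl : κ ≤ lam := YoungDiagram.cells_subset_iff.1 (hκ ▸ Finset.sdiff_subset)
  have hsub : κ.cells \ ν.cells ⊆ lam.cells \ ν.cells :=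
    Finset.sdiff_subset_sdiff (YoungDiagram.cells_subset_iff.2 hκl) subset_rfl
  refine ⟨κ, hκl, ?_, ?_, fun t' ht' => h.ribbon t' (Finset.mem_of_mem_erase ht'),
    fun s hs s' hs' => h.disj s (Finset.mem_of_mem_erase hs) s' (Finset.mem_of_mem_erase hs'),
    ?_, fun hb t' ht' => ?_, fun hb t' ht' => ?_⟩
  · rw [hκ, Finset.sdiff_sdiff_eq_self (htsub.trans Finset.sdiff_subset)]
  · rw [← YoungDiagram.cells_subset_iff, hκ]
    intro x hx
    exact Finset.mem_sdiff.2 ⟨YoungDiagram.cells_subset_iff.2 h.le hx,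
      fun hxt => (Finset.mem_sdiff.1 (htsub hxt)).2 hx⟩
  · ext x
    rw [Finset.mem_sup, hκ]
    simp only [Finset.mem_erase, id, Finset.mem_sdiff]
    constructor
    · rintro ⟨s, ⟨hs, hsD⟩, hx⟩
      have := Finset.mem_sdiff.1 ((h.mem_iff x).2 ⟨s, hsD, hx⟩)
      exact ⟨⟨this.1, fun hxt => Finset.disjoint_left.1 (h.disj s hsD t ht hs) hx hxt⟩, this.2⟩
    · rintro ⟨⟨h1, h2⟩, h3⟩
      obtain ⟨s, hsD, hx⟩ := (h.mem_iff x).1 (Finset.mem_sdiff.2 ⟨h1, h3⟩)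
      exact ⟨s, ⟨fun e => h2 (e ▸ hx), hsD⟩, hx⟩
  · rcases h.north hb t' (Finset.mem_of_mem_erase ht') with h1 | h1
    · exact Or.inl h1
    · exact Or.inr fun h2 => h1 (hsub h2)
  · rcases h.west hb t' (Finset.mem_of_mem_erase ht') with h1 | h1
    · exact Or.inl h1
    · exact Or.inr fun h2 => h1 (hsub h2)

/-- The ribbon of largest head content can be removed from a horizontal strip, and the
other heads have smaller content. -/
theorem peel_north (hn : 1 ≤ n) (h : IsStrip n true ν lam D) (c : ℤ)
    (hc : ∀ t ∈ D, ∀ x ∈ t, ct x ≤ c) {t : Finset (ℕ × ℕ)} (ht : t ∈ D) {x0 : ℕ × ℕ}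
    (hx0 : x0 ∈ t) (hx0c : ct x0 = c) :
    (∀ t' ∈ D.erase t, ∀ x ∈ t', ct x < c) ∧
    ∃ κ : YoungDiagram, κ ≤ lam ∧ lam.cells \ κ.cells = t ∧ IsStrip n true ν κ (D.erase t) := by
  have hmem : ∀ {s x}, s ∈ D → x ∈ s → x ∈ lam.cells \ ν.cells := fun hs hx =>
    (h.mem_iff _).2 ⟨_, hs, hx⟩
  obtain ⟨p, hf⟩ := (h.ribbon t ht).facts hn
  have hp := hf.mem_contents x0 hx0
  constructor
  · intro t' ht' x hx
    obtain ⟨hne, ht'⟩ := Finset.mem_erase.1 ht'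
    refine lt_of_le_of_ne (hc t' ht' x hx) fun hxc => ?_
    obtain ⟨p', hf'⟩ := (h.ribbon t' ht').facts hn
    have e1 := hf.topRight_eq hx0 fun y hy => by rw [hx0c]; exact hc t ht y hy
    have e2 := hf'.topRight_eq hx fun y hy => by rw [hxc]; exact hc t' ht' y hy
    rcases lt_trichotomy x.1 x0.1 with hlt | heq | hlt
    · exact h.head_north ht hx0 e1 (hmem ht' hx) hlt (by simp only [ct] at *; omega)
    · have : x = x0 := by simp only [ct] at *; ext <;> omega
      exact Finset.disjoint_left.1 (h.disj t' ht' t ht hne) hx (this ▸ hx0)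
    · exact h.head_north ht' hx e2 (hmem ht hx0) hlt (by simp only [ct] at *; omega)
  · refine h.erase ht fun t' ht' hne x hx y hy hxy => ?_
    obtain ⟨p', hf'⟩ := (h.ribbon t' ht').facts hn
    have hdisj := h.disj t ht t' ht' hne.symm
    obtain ⟨z, hz, hzc, hzh⟩ := hf'.exists_head hn
    have hzle := hc t' ht' z hz
    have bx := hf.mem_contents x hx
    have by' := hf'.mem_contents y hy
    -- on some common diagonal, `t` lies north-west of `t'`
    obtain ⟨a, ha, a', ha', haa, hlt⟩ : ∃ a ∈ t, ∃ a' ∈ t', ct a = ct a' ∧ a.1 < a'.1 := by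
      rcases hxy with hxy | hxy
      · have hyc : ct y = ct x + 1 := by simp only [ct]; omega
        obtain ⟨a, ha, hac⟩ := hf.exists_mem (ct x + 1) (by omega) (by omega)
        refine ⟨a, ha, y, hy, by omega, ?_⟩
        rcases hf.step x hx a ha hac with hs | hs
        · have : a = y := by ext <;> omega
          exact absurd (this ▸ hy) (Finset.disjoint_left.1 hdisj ha)
        · omega
      · have hyc : ct y = ct x - 1 := by simp only [ct]; omega
        by_cases hh : ct x < p' + n
        · obtain ⟨a, ha, hac⟩ := hf'.exists_mem (ct x) (by omega) hh
          refine ⟨x, hx, a, ha, by omega, ?_⟩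
          rcases hf'.step y hy a ha (by omega) with hs | hs
          · omega
          · have : a = x := by ext <;> omega
            exact absurd (this ▸ ha) (Finset.disjoint_left.1 hdisj hx)
        · have : y = z := hf'.uniq y hy z hz (by omega)
          subst this
          exact (h.head_north ht' hz hzh (hmem ht hx) (by omega) (by omega)).elim
    have ba := hf.mem_contents a ha
    have ba' := hf'.mem_contents a' ha'
    obtain ⟨w, hw, hwc⟩ := hf.exists_mem (ct z) (by omega) (by omega)
    have hwz := hf.noncross hf' hdisj ha ha' haa hlt hw hz hwc
    exact h.head_north ht' hz hzh (hmem ht hw) hwz (by simp only [ct] at hwc; omega)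

/-- The ribbon of smallest tail content can be removed from a vertical strip, and the
other tails have larger content. -/
theorem peel_west (hn : 1 ≤ n) (h : IsStrip n false ν lam D) (c : ℤ)
    (hc : ∀ t ∈ D, ∀ x ∈ t, c ≤ ct x) {t : Finset (ℕ × ℕ)} (ht : t ∈ D) {x0 : ℕ × ℕ}
    (hx0 : x0 ∈ t) (hx0c : ct x0 = c) :
    (∀ t' ∈ D.erase t, ∀ x ∈ t', c < ct x) ∧
    ∃ κ : YoungDiagram, κ ≤ lam ∧ lam.cells \ κ.cells = t ∧ IsStrip n false ν κ (D.erase t) := by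
  have hmem : ∀ {s x}, s ∈ D → x ∈ s → x ∈ lam.cells \ ν.cells := fun hs hx =>
    (h.mem_iff _).2 ⟨_, hs, hx⟩
  obtain ⟨p, hf⟩ := (h.ribbon t ht).facts hn
  have hp := hf.mem_contents x0 hx0
  constructor
  · intro t' ht' x hx
    obtain ⟨hne, ht'⟩ := Finset.mem_erase.1 ht'
    refine lt_of_le_of_ne (hc t' ht' x hx) fun hxc => ?_
    obtain ⟨p', hf'⟩ := (h.ribbon t' ht').facts hn
    have e1 := hf.bottomLeft_eq hx0 fun y hy => by rw [hx0c]; exact hc t ht y hy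
    have e2 := hf'.bottomLeft_eq hx fun y hy => by rw [← hxc]; exact hc t' ht' y hy
    rcases lt_trichotomy x.1 x0.1 with hlt | heq | hlt
    · exact h.tail_west ht hx0 e1 (hmem ht' hx) hlt.le (by simp only [ct] at *; omega)
    · have : x = x0 := by simp only [ct] at *; ext <;> omega
      exact Finset.disjoint_left.1 (h.disj t' ht' t ht hne) hx (this ▸ hx0)
    · exact h.tail_west ht' hx e2 (hmem ht hx0) hlt.le (by simp only [ct] at *; omega)
  · refine h.erase ht fun t' ht' hne x hx y hy hxy => ?_
    obtain ⟨p', hf'⟩ := (h.ribbon t' ht').facts hn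
    have hdisj := h.disj t ht t' ht' hne.symm
    obtain ⟨z, hz, hzc, hzh⟩ := hf'.exists_tail hn
    have hzle := hc t' ht' z hz
    have bx := hf.mem_contents x hx
    have by' := hf'.mem_contents y hy
    -- on some common diagonal, `t` lies north-west of `t'`
    obtain ⟨a, ha, a', ha', haa, hlt⟩ : ∃ a ∈ t, ∃ a' ∈ t', ct a = ct a' ∧ a.1 < a'.1 := by
      rcases hxy with hxy | hxy
      · have hyc : ct y = ct x + 1 := by simp only [ct]; omega
        by_cases hh : p' ≤ ct x
        · obtain ⟨a, ha, hac⟩ := hf'.exists_mem (ct x) hh (by omega)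
          refine ⟨x, hx, a, ha, by omega, ?_⟩
          rcases hf'.step a ha y hy (by omega) with hs | hs
          · have : a = x := by ext <;> omega
            exact absurd (this ▸ ha) (Finset.disjoint_left.1 hdisj hx)
          · omega
        · have : y = z := hf'.uniq y hy z hz (by omega)
          subst this
          exact (h.tail_west ht' hz hzh (hmem ht hx) (by omega) (by omega)).elim
      · have hyc : ct y = ct x - 1 := by simp only [ct]; omega
        obtain ⟨a, ha, hac⟩ := hf.exists_mem (ct x - 1) (by omega) (by omega)
        refine ⟨a, ha, y, hy, by omega, ?_⟩
        rcases hf.step a ha x hx (by omega) with hs | hs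
        · omega
        · have : a = y := by ext <;> omega
          exact absurd (this ▸ hy) (Finset.disjoint_left.1 hdisj ha)
    have ba := hf.mem_contents a ha
    have ba' := hf'.mem_contents a' ha'
    obtain ⟨w, hw, hwc⟩ := hf.exists_mem (ct z) (by omega) (by omega)
    have hwz := hf.noncross hf' hdisj ha ha' haa hlt hw hz hwc
    exact h.tail_west ht' hz hzh (hmem ht hw) hwz.le (by simp only [ct] at hwc; omega)

/-- Adding a ribbon to a strip, beyond all its ribbons in the direction of the strip. -/
theorem insert (hn : 1 ≤ n) {p : ℤ} {κ : YoungDiagram} (h : IsStrip n b ν κ D)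
    (hadd : IsAdd n p κ lam)
    (hN : b = true → ∀ t ∈ D, ∀ x ∈ t, ct x < p + n - 1)
    (hW : b = false → ∀ t ∈ D, ∀ x ∈ t, p < ct x) :
    IsStrip n b ν lam (insert (lam.cells \ κ.cells) D) := by
  have hκ := YoungDiagram.cells_subset_iff.2 hadd.le
  have hν := YoungDiagram.cells_subset_iff.2 h.le
  have hmem : ∀ {s x}, s ∈ D → x ∈ s → x ∈ κ.cells \ ν.cells := fun hs hx =>
    (h.mem_iff _).2 ⟨_, hs, hx⟩
  have hd : ∀ s ∈ D, Disjoint s (lam.cells \ κ.cells) := fun s hs =>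
    Finset.disjoint_left.2 fun x hx hx' =>
      (Finset.mem_sdiff.1 hx').2 (Finset.mem_sdiff.1 (hmem hs hx)).1
  have hun : lam.cells \ ν.cells = lam.cells \ κ.cells ∪ κ.cells \ ν.cells := by
    ext x
    have h1 := @hκ x
    have h2 := @hν x
    simp only [Finset.mem_union, Finset.mem_sdiff]
    tauto
  refine ⟨h.le.trans hadd.le, fun t ht => ?_, fun t ht t' ht' hne => ?_, ?_, fun hb t ht => ?_,
    fun hb t ht => ?_⟩
  · rcases Finset.mem_insert.1 ht with rfl | ht
    · exact hadd.isRibbon hn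
    · exact h.ribbon t ht
  · rcases Finset.mem_insert.1 ht with rfl | ht <;> rcases Finset.mem_insert.1 ht' with rfl | ht'
    · exact absurd rfl hne
    · exact (hd t' ht').symm
    · exact hd t ht
    · exact h.disj t ht t' ht' hne
  · rw [Finset.sup_insert, h.sup_eq, hun]; rfl
  · rcases Finset.mem_insert.1 ht with rfl | ht
    · obtain ⟨y, hy, hyc, hyh⟩ := hadd.facts.exists_head hn
      rw [hyh]
      by_cases hy0 : y.1 = 0
      · exact Or.inl hy0
      refine Or.inr fun hm => ?_
      have hc : ct (y.1 - 1, y.2) = p + n := by simp only [ct] at *; omega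
      rw [hun, Finset.mem_union] at hm
      rcases hm with hm | hm
      · have := hadd.facts.mem_contents _ hm
        omega
      · obtain ⟨s, hs, hx⟩ := (h.mem_iff _).1 hm
        have := hN hb s hs _ hx
        omega
    · obtain ⟨p', hf⟩ := (h.ribbon t ht).facts hn
      obtain ⟨y, hy, -, hyh⟩ := hf.exists_head hn
      have := h.north hb t ht
      rw [hyh] at *
      rcases this with h1 | h1
      · exact Or.inl h1
      · refine Or.inr fun h2 => h1 (Finset.mem_sdiff.2 ⟨?_, (Finset.mem_sdiff.1 h2).2⟩)
        exact κ.isLowerSet (show (y.1 - 1, y.2) ≤ y from Prod.le_def.2 ⟨Nat.sub_le _ _, le_rfl⟩)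
          (Finset.mem_sdiff.1 (hmem ht hy)).1
  · rcases Finset.mem_insert.1 ht with rfl | ht
    · obtain ⟨y, hy, hyc, hyh⟩ := hadd.facts.exists_tail hn
      rw [hyh]
      by_cases hy0 : y.2 = 0
      · exact Or.inl hy0
      refine Or.inr fun hm => ?_
      have hc : ct (y.1, y.2 - 1) = p - 1 := by simp only [ct] at *; omega
      rw [hun, Finset.mem_union] at hm
      rcases hm with hm | hm
      · have := hadd.facts.mem_contents _ hm
        omega
      · obtain ⟨s, hs, hx⟩ := (h.mem_iff _).1 hm
        have := hW hb s hs _ hx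
        omega
    · obtain ⟨p', hf⟩ := (h.ribbon t ht).facts hn
      obtain ⟨y, hy, -, hyh⟩ := hf.exists_tail hn
      have := h.west hb t ht
      rw [hyh] at *
      rcases this with h1 | h1
      · exact Or.inl h1
      · refine Or.inr fun h2 => h1 (Finset.mem_sdiff.2 ⟨?_, (Finset.mem_sdiff.1 h2).2⟩)
        exact κ.isLowerSet (show (y.1, y.2 - 1) ≤ y from Prod.le_def.2 ⟨le_rfl, Nat.sub_le _ _⟩)
          (Finset.mem_sdiff.1 (hmem ht hy)).1

end IsStrip

/-! ### Generating functions of strips -/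

section stripSum

variable {R : Type*} [CommRing R]

open scoped Classical in
/-- The horizontal (`b = true`) or vertical (`b = false`) ribbon strips of shape `lam / ν`
all of whose contents satisfy `P`. -/
noncomputable def strips (n : ℕ) (b : Bool) (P : ℤ → Prop) (ν lam : YoungDiagram) :
    Finset (Finset (Finset (ℕ × ℕ))) :=
  (lam.cells \ ν.cells).powerset.powerset.filter fun D =>
    IsStrip n b ν lam D ∧ ∀ t ∈ D, ∀ x ∈ t, P (ct x)

/-- The generating function of `strips`, each ribbon `t` having weight `z * q ^ spin t`. -/
noncomputable def stripSum (n : ℕ) (b : Bool) (q z : R) (P : ℤ → Prop) (ν lam : YoungDiagram) :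
    R :=
  ∑ D ∈ strips n b P ν lam, ∏ t ∈ D, (z * q ^ spin t)

theorem mem_strips {n : ℕ} {b : Bool} {P : ℤ → Prop} {ν lam : YoungDiagram}
    {D : Finset (Finset (ℕ × ℕ))} :
    D ∈ strips n b P ν lam ↔ IsStrip n b ν lam D ∧ ∀ t ∈ D, ∀ x ∈ t, P (ct x) := by
  classical
  rw [strips, Finset.mem_filter, and_iff_right_iff_imp]
  rintro ⟨h, -⟩
  refine Finset.mem_powerset.2 fun t ht => Finset.mem_powerset.2 fun x hx => ?_
  exact (h.mem_iff x).2 ⟨t, ht, hx⟩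

/-- Coefficients of `addOp n q p v`: at `lam` only the removal of the ribbon with smallest
content `p` contributes. -/
theorem addOp_apply {n : ℕ} (hn : 1 ≤ n) (q : R) (p : ℤ) (κ lam : YoungDiagram)
    (h : IsAdd n p κ lam) (v : YoungDiagram →₀ R) :
    addOp n q p v lam = v κ * q ^ addSpin n p (ht κ) := by
  classical
  induction v using Finsupp.induction_linear with
  | zero => simp
  | add f g hf hg => rw [map_add, Finsupp.add_apply, hf, hg, Finsupp.add_apply, add_mul]
  | single ν c =>
    by_cases e : ν = κ
    · subst e; rw [addOp_single h]; simp
    · rw [Finsupp.single_eq_of_ne (Ne.symm e), zero_mul]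
      by_cases ha : Addable n p (ht ν)
      · obtain ⟨ν', hν'⟩ := exists_isAdd ha
        rw [addOp_single hν', Finsupp.single_eq_of_ne]
        rintro rfl
        exact e (hν'.unique_left h)
      · rw [addOp_single_of_not hn ha]; rfl

theorem addOp_apply_of_not {n : ℕ} (hn : 1 ≤ n) (q : R) (p : ℤ) (lam : YoungDiagram)
    (h : ¬∃ κ, IsAdd n p κ lam) (v : YoungDiagram →₀ R) : addOp n q p v lam = 0 := by
  classical
  induction v using Finsupp.induction_linear with
  | zero => simp
  | add f g hf hg => rw [map_add, Finsupp.add_apply, hf, hg, add_zero]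
  | single ν c =>
    by_cases ha : Addable n p (ht ν)
    · obtain ⟨ν', hν'⟩ := exists_isAdd ha
      rw [addOp_single hν', Finsupp.single_eq_of_ne]
      rintro rfl
      exact h ⟨_, hν'⟩
    · rw [addOp_single_of_not hn ha]; rfl

/-- If enlarging the set `P` of contents to `P'` allows exactly one additional ribbon, with
smallest content `p`, which is then removable, then the generating functions of strips differ
by an application of `1 + z • addOp n q p`. -/
theorem stripSum_step {n : ℕ} (hn : 1 ≤ n) (b : Bool) (q z : R) (p : ℤ) (P P' : ℤ → Prop)
    (hPP' : ∀ c, P c → P' c) (ν lam : YoungDiagram)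
    (hpeel : ∀ D, IsStrip n b ν lam D → (∀ t ∈ D, ∀ x ∈ t, P' (ct x)) →
      ¬(∀ t ∈ D, ∀ x ∈ t, P (ct x)) → ∃ t ∈ D, ∃ κ : YoungDiagram, IsAdd n p κ lam ∧
        lam.cells \ κ.cells = t ∧ IsStrip n b ν κ (D.erase t) ∧
        ∀ t' ∈ D.erase t, ∀ x ∈ t', P (ct x))
    (hins : ∀ κ D, IsAdd n p κ lam → IsStrip n b ν κ D → (∀ t ∈ D, ∀ x ∈ t, P (ct x)) →
      IsStrip n b ν lam (insert (lam.cells \ κ.cells) D))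
    (hP' : ∀ c, p ≤ c → c < p + n → P' c) (hP : ∃ c, p ≤ c ∧ c < p + n ∧ ¬P c)
    (v : YoungDiagram →₀ R) (hv : v lam = stripSum n b q z P ν lam)
    (hv' : ∀ κ, IsAdd n p κ lam → v κ = stripSum n b q z P ν κ) :
    (((1 : Module.End R (YoungDiagram →₀ R)) + z • addOp n q p) v) lam =
      stripSum n b q z P' ν lam := by
  classical
  rw [LinearMap.add_apply, Module.End.one_apply, LinearMap.smul_apply, Finsupp.add_apply,
    Finsupp.smul_apply, smul_eq_mul, hv, stripSum, stripSum,
    ← Finset.sum_filter_add_sum_filter_not (strips n b P' ν lam)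
      (fun D => ∀ t ∈ D, ∀ x ∈ t, P (ct x))]
  congr 1
  · refine Finset.sum_congr ?_ fun _ _ => rfl
    ext D
    rw [Finset.mem_filter, mem_strips, mem_strips]
    exact ⟨fun h => ⟨⟨h.1, fun t ht x hx => hPP' _ (h.2 t ht x hx)⟩, h.2⟩, fun h => ⟨h.1.1, h.2⟩⟩
  by_cases hex : ∃ κ, IsAdd n p κ lam
  · obtain ⟨κ, hκ⟩ := hex
    rw [addOp_apply hn q p κ lam hκ, hv' κ hκ, stripSum]
    set t₀ := lam.cells \ κ.cells with ht₀
    have hbad : ∃ x ∈ t₀, ¬P (ct x) := by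
      obtain ⟨c, h1, h2, h3⟩ := hP
      obtain ⟨x, hx, rfl⟩ := hκ.facts.exists_mem c h1 h2
      exact ⟨x, hx, h3⟩
    have hnot : ∀ D ∈ strips n b P ν κ, t₀ ∉ D := by
      intro D hD h
      obtain ⟨x, hx, hxP⟩ := hbad
      exact hxP ((mem_strips.1 hD).2 _ h x hx)
    have hmain : ∀ D ∈ (strips n b P' ν lam).filter (fun D => ¬∀ t ∈ D, ∀ x ∈ t, P (ct x)),
        t₀ ∈ D ∧ D.erase t₀ ∈ strips n b P ν κ := by
      intro D hD
      obtain ⟨h1, h2⟩ := Finset.mem_filter.1 hD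
      obtain ⟨h1, h3⟩ := mem_strips.1 h1
      obtain ⟨t, ht, κ', hκ', rfl, h4, h5⟩ := hpeel D h1 h3 h2
      obtain rfl := hκ'.unique_left hκ
      exact ⟨ht, mem_strips.2 ⟨h4, h5⟩⟩
    rw [mul_comm _ (q ^ addSpin n p (ht κ)), ← mul_assoc, Finset.mul_sum]
    symm
    refine Finset.sum_nbij' (fun D => D.erase t₀) (fun D => insert t₀ D)
      (fun D hD => (hmain D hD).2) (fun D hD => ?_) (fun D hD => Finset.insert_erase (hmain D hD).1)
      (fun D hD => Finset.erase_insert (hnot D hD)) fun D hD => ?_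
    · obtain ⟨h1, h2⟩ := mem_strips.1 hD
      rw [Finset.mem_filter, mem_strips]
      refine ⟨⟨hins κ D hκ h1 h2, fun t ht x hx => ?_⟩, fun h => ?_⟩
      · rcases Finset.mem_insert.1 ht with rfl | ht
        · have := hκ.facts.mem_contents x hx
          exact hP' _ this.1 this.2
        · exact hPP' _ (h2 t ht x hx)
      · obtain ⟨x, hx, hxP⟩ := hbad
        exact hxP (h _ (Finset.mem_insert_self _ _) x hx)
    · rw [← Finset.mul_prod_erase D _ (hmain D hD).1, hκ.spin_eq hn]
  · rw [addOp_apply_of_not hn q p lam hex, mul_zero]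
    symm
    refine Finset.sum_eq_zero fun D hD => (hex ?_).elim
    obtain ⟨h1, h2⟩ := Finset.mem_filter.1 hD
    obtain ⟨h1, h3⟩ := mem_strips.1 h1
    obtain ⟨t, ht, κ, hκ, -⟩ := hpeel D h1 h3 h2
    exact ⟨κ, hκ⟩

/-- If `P` leaves no room for a ribbon, only the empty strip remains. -/
theorem stripSum_of_forall_false {n : ℕ} (b : Bool) (q z : R) (P : ℤ → Prop)
    (ν lam : YoungDiagram)
    (h : ∀ D, IsStrip n b ν lam D → (∀ t ∈ D, ∀ x ∈ t, P (ct x)) → ∀ t ∈ D, False) :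
    stripSum n b q z P ν lam = Finsupp.single ν (1 : R) lam := by
  classical
  have hD : ∀ D ∈ strips n b P ν lam, D = ∅ ∧ ν = lam := by
    intro D hD
    obtain ⟨h1, h2⟩ := mem_strips.1 hD
    have e : D = ∅ := Finset.eq_empty_of_forall_notMem fun t ht => h D h1 h2 t ht
    refine ⟨e, le_antisymm h1.le ?_⟩
    have := h1.sup_eq
    rw [e, Finset.sup_empty] at this
    exact YoungDiagram.cells_subset_iff.1 (Finset.sdiff_eq_empty_iff_subset.1 this.symm)
  by_cases e : ν = lam
  · subst e
    have : strips n b P ν ν = {∅} := by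
      ext D
      rw [Finset.mem_singleton]
      refine ⟨fun h => (hD D h).1, ?_⟩
      rintro rfl
      refine mem_strips.2 ⟨⟨le_rfl, ?_, ?_, ?_, ?_, ?_⟩, ?_⟩ <;> simp
    rw [stripSum, this]
    simp
  · rw [Finsupp.single_eq_of_ne (Ne.symm e), stripSum, Finset.sum_eq_zero]
    exact fun D h => (e (hD D h).2).elim

/-- Horizontal strips are built by adding ribbons from left to right. -/
theorem hProd_apply {n : ℕ} (hn : 1 ≤ n) (q z : R) (N : ℕ) (ν : YoungDiagram) (k : ℕ) :
    ∀ lam : YoungDiagram, (∀ c ∈ lam.cells, c.1 < N) →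
    (hProd (fun i : ℕ => addOp n q ((i : ℤ) - N)) z k (Finsupp.single ν (1 : R))) lam =
      stripSum n true q z (fun c => c < (k : ℤ) - N + n - 1) ν lam := by
  induction k with
  | zero =>
    intro lam hN
    rw [stripSum_of_forall_false]
    · rfl
    intro D hD hP t ht
    obtain ⟨p, hf⟩ := (hD.ribbon t ht).facts hn
    obtain ⟨x, hx, hxc⟩ := hf.exists_mem p (by omega) (by omega)
    obtain ⟨y, hy, hyc, -⟩ := hf.exists_head hn
    have h1 := hP t ht y hy
    have h2 := hN x (Finset.mem_sdiff.1 ((hD.mem_iff x).2 ⟨t, ht, hx⟩)).1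
    simp only [ct] at *
    omega
  | succ k ih =>
    intro lam hN
    rw [hProd, Module.End.mul_apply]
    refine stripSum_step hn true q z ((k : ℤ) - N) (fun c => c < (k : ℤ) - N + n - 1) _
      (fun c hc => ?_) ν lam (fun D hD hP' hP => ?_) (fun κ D hκ hD hP => ?_)
      (fun c h1 h2 => ?_) ⟨(k : ℤ) - N + n - 1, by omega, by omega, by omega⟩ _ (ih lam hN)
      fun κ hκ => ih κ fun c hc => hN c (YoungDiagram.cells_subset_iff.2 hκ.le hc)
    · push_cast; omega
    · push Not at hP
      obtain ⟨t, ht, x, hx, hxc⟩ := hP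
      have hc : ∀ t ∈ D, ∀ x ∈ t, ct x ≤ (k : ℤ) - N + n - 1 := fun t ht x hx => by
        have := hP' t ht x hx; push_cast at this; omega
      have hx' : ct x = (k : ℤ) - N + n - 1 := le_antisymm (hc t ht x hx) hxc
      obtain ⟨h1, κ, h2, h3, h4⟩ := hD.peel_north hn _ hc ht hx hx'
      refine ⟨t, ht, κ, ?_, h3, h4, h1⟩
      obtain ⟨p, hf⟩ := (hD.ribbon t ht).facts hn
      obtain ⟨y, hy, hyc, -⟩ := hf.exists_head hn
      have h5 := hc t ht y hy
      have h6 := hf.mem_contents x hx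
      obtain rfl : p = (k : ℤ) - N := by omega
      exact RibbonFacts.isAdd h2 (h3 ▸ hf)
    · exact hD.insert hn hκ (fun _ t ht x hx => hP t ht x hx) (by simp)
    · push_cast; omega

theorem vProd_succ' {A : Type*} [Ring A] [Algebra R A] (u : ℕ → A) (z : R) (k : ℕ) :
    vProd u z (k + 1) = (1 + z • u 0) * vProd (fun i => u (i + 1)) z k := by
  induction k with
  | zero => simp [vProd]
  | succ k ih => rw [vProd, ih, mul_assoc]; rfl

/-- Vertical strips are built by adding ribbons from right to left. -/
theorem vProd_apply {n : ℕ} (hn : 1 ≤ n) (q z : R) (ν : YoungDiagram) (k : ℕ) :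
    ∀ (M : ℤ) (lam : YoungDiagram), (∀ c ∈ lam.cells, ct c < M + k) →
    (vProd (fun i : ℕ => addOp n q ((i : ℤ) + M)) z k (Finsupp.single ν (1 : R))) lam =
      stripSum n false q z (fun c => M ≤ c) ν lam := by
  induction k with
  | zero =>
    intro M lam hN
    rw [stripSum_of_forall_false]
    · rfl
    intro D hD hP t ht
    obtain ⟨p, hf⟩ := (hD.ribbon t ht).facts hn
    obtain ⟨x, hx, hxc⟩ := hf.exists_mem p (by omega) (by omega)
    have h1 := hP t ht x hx
    have h2 := hN x (Finset.mem_sdiff.1 ((hD.mem_iff x).2 ⟨t, ht, hx⟩)).1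
    push_cast at h2
    omega
  | succ k ih =>
    intro M lam hN
    have e : (fun i : ℕ => addOp n q (((i + 1 : ℕ) : ℤ) + M)) =
        fun i : ℕ => addOp n q ((i : ℤ) + (M + 1)) := by
      funext i; congr 1; push_cast; ring
    rw [vProd_succ', Module.End.mul_apply, e, Nat.cast_zero, zero_add]
    refine stripSum_step hn false q z M (fun c => M + 1 ≤ c) _
      (fun c hc => ?_) ν lam (fun D hD hP' hP => ?_) (fun κ D hκ hD hP => ?_)
      (fun c h1 h2 => h1) ⟨M, by omega, by omega, by omega⟩ _
      (ih _ lam fun c hc => by have := hN c hc; push_cast at this; omega)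
      fun κ hκ => ih _ κ fun c hc => by
        have := hN c (YoungDiagram.cells_subset_iff.2 hκ.le hc); push_cast at this; omega
    · omega
    · push Not at hP
      obtain ⟨t, ht, x, hx, hxc⟩ := hP
      have hx' : ct x = M := le_antisymm (by omega) (hP' t ht x hx)
      obtain ⟨h1, κ, h2, h3, h4⟩ := hD.peel_west hn _ hP' ht hx hx'
      refine ⟨t, ht, κ, ?_, h3, h4, fun t' ht' x hx => h1 t' ht' x hx⟩
      obtain ⟨p, hf⟩ := (hD.ribbon t ht).facts hn
      obtain ⟨y, hy, hyc, -⟩ := hf.exists_tail hn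
      have h5 := hP' t ht y hy
      have h6 := hf.mem_contents x hx
      obtain rfl : p = M := by omega
      exact RibbonFacts.isAdd h2 (h3 ▸ hf)
    · exact hD.insert hn hκ (by simp) (fun _ t ht x hx => hP t ht x hx)

/-- The operator attached to a letter generates the strips of that letter's kind. -/
theorem letterOp_apply {n : ℕ} (hn : 1 ≤ n) (b : Bool) (q z : R) (N : ℕ)
    (ν lam : YoungDiagram) (hN : ∀ c ∈ lam.cells, c.1 < N ∧ c.2 < N) :
    (letterOp (fun i : ℕ => addOp n q ((i : ℤ) - N)) (2 * N) b z (Finsupp.single ν (1 : R))) lam =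
      stripSum n b q z (fun _ => True) ν lam := by
  have hcongr : ∀ P : ℤ → Prop, (∀ c ∈ lam.cells, P (ct c)) →
      stripSum n b q z P ν lam = stripSum n b q z (fun _ => True) ν lam := by
    intro P hP
    refine Finset.sum_congr ?_ fun _ _ => rfl
    ext D
    rw [mem_strips, mem_strips]
    refine ⟨fun h => ⟨h.1, fun _ _ _ _ => trivial⟩, fun h => ⟨h.1, fun t ht x hx => hP x ?_⟩⟩
    exact (Finset.mem_sdiff.1 ((h.1.mem_iff x).2 ⟨t, ht, hx⟩)).1
  cases b with
  | true =>
    rw [letterOp, if_pos rfl, hProd_apply hn q z N ν (2 * N) lam fun c hc => (hN c hc).1]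
    refine hcongr _ fun c hc => ?_
    have := hN c hc
    simp only [ct]; push_cast; omega
  | false =>
    have := vProd_apply hn q z ν (2 * N) (-N) lam fun c hc => by
      have := hN c hc
      simp only [ct]; push_cast; omega
    rw [letterOp, if_neg (by simp)]
    refine this.trans (hcongr _ fun c hc => ?_)
    have := hN c hc
    simp only [ct]; omega

end stripSum

/-! ### Peeling off the largest letter of a tableau -/

section tableaux

variable {L : Type*} {n : ℕ} {le : L → L → Prop} {b : L → Bool}

theorem mem_supFst {T : Finset (Finset (ℕ × ℕ) × L)} {x : ℕ × ℕ} :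
    x ∈ (T.sup fun p => p.1) ↔ ∃ p ∈ T, x ∈ p.1 := Finset.mem_sup

open scoped Classical in
/-- A tableau whose letters are smaller than `a`, followed by a strip of ribbons labelled
`a`, is a tableau. -/
theorem IsSuperTableau.join (htrans : ∀ x y z, le x y → le y z → le x z)
    {l : List L} {a : L} (hl : ∀ x ∈ l, le x a ∧ ¬le a x) {μ ν lam : YoungDiagram}
    {T : Finset (Finset (ℕ × ℕ) × L)} {D : Finset (Finset (ℕ × ℕ))}
    (hT : IsSuperTableau n μ ν le (fun a => b a = true) T) (hTl : ∀ p ∈ T, p.2 ∈ l)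
    (hD : IsStrip n (b a) ν lam D) :
    IsSuperTableau n μ lam le (fun a => b a = true) (T ∪ D.image fun t => (t, a)) := by
  obtain ⟨h1, h2, h3, h4, h5, h6⟩ := hT
  set U := T ∪ D.image fun t => (t, a) with hU
  have hmem : ∀ p, p ∈ U ↔ p ∈ T ∨ (p.1 ∈ D ∧ p.2 = a) := by
    rintro ⟨t, c⟩
    simp only [hU, Finset.mem_union, Finset.mem_image, Prod.mk.injEq]
    constructor
    · rintro (h | ⟨s, hs, rfl, rfl⟩)
      exacts [Or.inl h, Or.inr ⟨hs, rfl⟩]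
    · rintro (h | ⟨hs, rfl⟩)
      exacts [Or.inl h, Or.inr ⟨t, hs, rfl, rfl⟩]
  have hne : ∀ p ∈ T, p.2 ≠ a := fun p hp e => by
    have := hl _ (hTl p hp)
    rw [e] at this
    exact this.2 this.1
  have hTsub : ∀ p ∈ T, p.1 ⊆ ν.cells \ μ.cells := fun p hp x hx => by
    rw [← h4]; exact mem_supFst.2 ⟨p, hp, hx⟩
  have hDsub : ∀ t ∈ D, t ⊆ lam.cells \ ν.cells := fun t ht x hx => (hD.mem_iff x).2 ⟨t, ht, hx⟩
  have hTD : ∀ p ∈ T, ∀ t ∈ D, Disjoint p.1 t := fun p hp t ht =>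
    Finset.disjoint_left.2 fun x hx hx' =>
      (Finset.mem_sdiff.1 (hDsub t ht hx')).2 (Finset.mem_sdiff.1 (hTsub p hp hx)).1
  have hμν := YoungDiagram.cells_subset_iff.2 h1
  have hνlam := YoungDiagram.cells_subset_iff.2 hD.le
  have hsup : (U.sup fun p => p.1) = lam.cells \ μ.cells := by
    ext x
    rw [mem_supFst]
    constructor
    · rintro ⟨p, hp, hx⟩
      rcases (hmem p).1 hp with hp | ⟨hp, -⟩
      · have := Finset.mem_sdiff.1 (hTsub p hp hx)
        exact Finset.mem_sdiff.2 ⟨hνlam this.1, this.2⟩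
      · have := Finset.mem_sdiff.1 (hDsub _ hp hx)
        exact Finset.mem_sdiff.2 ⟨this.1, fun h => this.2 (hμν h)⟩
    · intro hx
      obtain ⟨hx1, hx2⟩ := Finset.mem_sdiff.1 hx
      by_cases hν : x ∈ ν.cells
      · have : x ∈ ν.cells \ μ.cells := Finset.mem_sdiff.2 ⟨hν, hx2⟩
        rw [← h4, mem_supFst] at this
        obtain ⟨p, hp, hx⟩ := this
        exact ⟨p, (hmem p).2 (Or.inl hp), hx⟩
      · obtain ⟨t, ht, hx⟩ := (hD.mem_iff x).1 (Finset.mem_sdiff.2 ⟨hx1, hν⟩)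
        exact ⟨(t, a), (hmem _).2 (Or.inr ⟨ht, rfl⟩), hx⟩
  refine ⟨h1.trans hD.le, fun p hp => ?_, fun p hp p' hp' hpp' => ?_, hsup, fun i => ?_,
    fun p hp => ?_⟩
  · rcases (hmem p).1 hp with hp | ⟨hp, -⟩
    exacts [h2 p hp, hD.ribbon _ hp]
  · rcases (hmem p).1 hp with hp | ⟨hp, e⟩ <;> rcases (hmem p').1 hp' with hp' | ⟨hp', e'⟩
    · exact h3 p hp p' hp' hpp'
    · exact hTD p hp _ hp'
    · exact (hTD p' hp' _ hp).symm
    · exact hD.disj _ hp _ hp' fun h => hpp' (Prod.ext h (e.trans e'.symm))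
  · by_cases hi : le a i
    · refine ⟨lam, ?_⟩
      rw [Finset.filter_true_of_mem, hsup, Finset.union_sdiff_of_subset (hμν.trans hνlam)]
      intro p hp
      rcases (hmem p).1 hp with hp | ⟨hp, e⟩
      · exact htrans _ _ _ (hl _ (hTl p hp)).1 hi
      · rwa [e]
    · obtain ⟨κ, hκ⟩ := h5 i
      refine ⟨κ, ?_⟩
      rw [hκ]
      congr 2
      ext p
      rw [Finset.mem_filter, Finset.mem_filter, hmem]
      constructor
      · exact fun h => ⟨Or.inl h.1, h.2⟩
      · rintro ⟨h | h, h'⟩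
        · exact ⟨h, h'⟩
        · exact absurd (h.2 ▸ h') hi
  · by_cases e : p.2 = a
    · have hpD : p.1 ∈ D := by
        rcases (hmem p).1 hp with hp | hp
        · exact absurd e (hne p hp)
        · exact hp.1
      have hs : ((U.filter fun p' => p'.2 = p.2).sup fun p' => p'.1) = lam.cells \ ν.cells := by
        ext x
        rw [mem_supFst, hD.mem_iff]
        constructor
        · rintro ⟨p', hp', hx⟩
          obtain ⟨hp', e'⟩ := Finset.mem_filter.1 hp'
          rcases (hmem p').1 hp' with hp' | hp'
          · exact absurd (e'.trans e) (hne p' hp')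
          · exact ⟨p'.1, hp'.1, hx⟩
        · rintro ⟨t, ht, hx⟩
          exact ⟨(t, a), Finset.mem_filter.2 ⟨(hmem _).2 (Or.inr ⟨ht, rfl⟩), e.symm⟩, hx⟩
      rw [hs, e]
      exact ⟨fun h => hD.north h _ hpD, fun h => hD.west (by simpa using h) _ hpD⟩
    · have hpT : p ∈ T := by
        rcases (hmem p).1 hp with hp | hp
        exacts [hp, absurd hp.2 e]
      have hs : (U.filter fun p' => p'.2 = p.2) = T.filter fun p' => p'.2 = p.2 := by
        ext p'
        rw [Finset.mem_filter, Finset.mem_filter, hmem]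
        constructor
        · rintro ⟨h | h, h'⟩
          exacts [⟨h, h'⟩, absurd (h'.symm.trans h.2) e]
        · exact fun h => ⟨Or.inl h.1, h.2⟩
      rw [hs]
      exact h6 p hpT

open scoped Classical in
/-- The ribbons of a tableau with largest letter `a` form a strip, and the other ribbons form
a tableau. -/
theorem IsSuperTableau.split (hrefl : ∀ x, le x x)
    (htrans : ∀ x y z, le x y → le y z → le x z)
    {l : List L} {a : L} (hl : (a :: l).Pairwise fun x y => le y x ∧ ¬le x y)
    {μ lam : YoungDiagram} {T : Finset (Finset (ℕ × ℕ) × L)}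
    (hT : IsSuperTableau n μ lam le (fun a => b a = true) T) (hTl : ∀ p ∈ T, p.2 ∈ a :: l) :
    ∃ ν : YoungDiagram,
      IsSuperTableau n μ ν le (fun a => b a = true) (T.filter fun p => p.2 ≠ a) ∧
      IsStrip n (b a) ν lam ((T.filter fun p => p.2 = a).image Prod.fst) := by
  obtain ⟨h1, h2, h3, h4, h5, h6⟩ := hT
  obtain ⟨hla, hl⟩ := List.pairwise_cons.1 hl
  have hne : ∀ x ∈ l, x ≠ a := by
    rintro x hx rfl
    exact (hla x hx).2 (hla x hx).1
  set T₀ := T.filter fun p => p.2 ≠ a with hT₀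
  have hT₀l : ∀ p ∈ T₀, p.2 ∈ l := fun p hp => by
    obtain ⟨hp, e⟩ := Finset.mem_filter.1 hp
    exact (List.mem_cons.1 (hTl p hp)).resolve_left e
  have hfil : ∀ i, ¬le a i → (T.filter fun p => le p.2 i) = T₀.filter fun p => le p.2 i := by
    intro i hi
    ext p
    rw [Finset.mem_filter, Finset.mem_filter, hT₀, Finset.mem_filter]
    exact ⟨fun h => ⟨⟨h.1, fun e => hi (e ▸ h.2)⟩, h.2⟩, fun h => ⟨h.1.1, h.2⟩⟩
  -- the shape of `T₀`: the tableau condition at the largest letter below `a`, if there is one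
  obtain ⟨ν, hν⟩ : ∃ ν : YoungDiagram, ν.cells = μ.cells ∪ (T₀.sup fun p => p.1) := by
    cases l with
    | nil =>
      refine ⟨μ, ?_⟩
      rw [Finset.eq_empty_of_forall_notMem fun p hp => List.not_mem_nil (hT₀l p hp),
        Finset.sup_empty]
      exact (Finset.union_empty _).symm
    | cons m l =>
      obtain ⟨ν, hν⟩ := h5 m
      refine ⟨ν, ?_⟩
      rw [hν, hfil m (hla m List.mem_cons_self).2, Finset.filter_true_of_mem]
      intro p hp
      rcases List.mem_cons.1 (hT₀l p hp) with e | h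
      · rw [e]; exact hrefl m
      · exact ((List.pairwise_cons.1 hl).1 _ h).1
  have hTsub : ∀ p ∈ T, p.1 ⊆ lam.cells \ μ.cells := fun p hp x hx => by
    rw [← h4]; exact mem_supFst.2 ⟨p, hp, hx⟩
  have hμν : μ ≤ ν := YoungDiagram.cells_subset_iff.1 (hν ▸ Finset.subset_union_left)
  have hνlam : ν ≤ lam := by
    rw [← YoungDiagram.cells_subset_iff, hν]
    refine Finset.union_subset (YoungDiagram.cells_subset_iff.2 h1) fun x hx => ?_
    obtain ⟨p, hp, hx⟩ := mem_supFst.1 hx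
    exact (Finset.mem_sdiff.1 (hTsub p (Finset.mem_filter.1 hp).1 hx)).1
  have hDmem : ∀ t, t ∈ (T.filter fun p => p.2 = a).image Prod.fst ↔ (t, a) ∈ T := by
    intro t
    rw [Finset.mem_image]
    constructor
    · rintro ⟨⟨s, c⟩, hp, rfl⟩
      obtain ⟨hp', rfl⟩ := Finset.mem_filter.1 hp
      exact hp'
    · exact fun h => ⟨(t, a), Finset.mem_filter.2 ⟨h, rfl⟩, rfl⟩
  have hstrip : ((T.filter fun p => p.2 = a).sup fun p => p.1) = lam.cells \ ν.cells := by
    ext x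
    rw [mem_supFst, Finset.mem_sdiff, hν, Finset.mem_union, mem_supFst]
    constructor
    · rintro ⟨p, hp, hx⟩
      obtain ⟨hp, e⟩ := Finset.mem_filter.1 hp
      have := Finset.mem_sdiff.1 (hTsub p hp hx)
      refine ⟨this.1, ?_⟩
      rintro (h | ⟨p', hp', hx'⟩)
      · exact this.2 h
      · obtain ⟨hp', e'⟩ := Finset.mem_filter.1 hp'
        exact Finset.disjoint_left.1 (h3 p hp p' hp' fun h => e' (h ▸ e)) hx hx'
    · rintro ⟨hx1, hx2⟩
      have : x ∈ lam.cells \ μ.cells := Finset.mem_sdiff.2 ⟨hx1, fun h => hx2 (Or.inl h)⟩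
      rw [← h4, mem_supFst] at this
      obtain ⟨p, hp, hx⟩ := this
      refine ⟨p, Finset.mem_filter.2 ⟨hp, ?_⟩, hx⟩
      by_contra e
      exact hx2 (Or.inr ⟨p, Finset.mem_filter.2 ⟨hp, e⟩, hx⟩)
  refine ⟨ν, ⟨hμν, fun p hp => h2 p (Finset.mem_filter.1 hp).1, fun p hp p' hp' =>
    h3 p (Finset.mem_filter.1 hp).1 p' (Finset.mem_filter.1 hp').1, ?_, fun i => ?_,
    fun p hp => ?_⟩, ⟨hνlam, fun t ht => h2 _ ((hDmem t).1 ht), fun t ht t' ht' hne' => ?_, ?_,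
    fun hb t ht => ?_, fun hb t ht => ?_⟩⟩
  · rw [hν, Finset.union_sdiff_cancel_left]
    refine Finset.disjoint_right.2 fun x hx => ?_
    obtain ⟨p, hp, hx⟩ := mem_supFst.1 hx
    exact (Finset.mem_sdiff.1 (hTsub p (Finset.mem_filter.1 hp).1 hx)).2
  · by_cases hai : le a i
    · refine ⟨ν, ?_⟩
      rw [Finset.filter_true_of_mem fun p hp => htrans _ _ _ (hla _ (hT₀l p hp)).1 hai, hν]
    · obtain ⟨κ, hκ⟩ := h5 i
      exact ⟨κ, by rw [hκ, hfil i hai]⟩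
  · obtain ⟨hpT, e⟩ := Finset.mem_filter.1 hp
    have hs : (T₀.filter fun p' => p'.2 = p.2) = T.filter fun p' => p'.2 = p.2 := by
      ext p'
      rw [Finset.mem_filter, Finset.mem_filter, Finset.mem_filter]
      exact ⟨fun h => ⟨h.1.1, h.2⟩, fun h => ⟨⟨h.1, fun e' => e (h.2.symm.trans e')⟩, h.2⟩⟩
    rw [hs]
    exact h6 p hpT
  · exact h3 _ ((hDmem t).1 ht) _ ((hDmem t').1 ht') fun h => hne' (congrArg Prod.fst h)
  · rw [← hstrip, Finset.sup_image]; rfl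
  · have := (h6 _ ((hDmem t).1 ht)).1 hb
    rwa [hstrip] at this
  · have := (h6 _ ((hDmem t).1 ht)).2 (by simp [hb])
    rwa [hstrip] at this

end tableaux

/-! ### Tableaux as coefficients of products of commuting operators -/

section final

variable {R : Type*} [CommRing R]

/-- The Young diagrams contained in `lam`. -/
noncomputable def subDiagrams (lam : YoungDiagram) : Finset YoungDiagram :=
  lam.cells.powerset.preimage YoungDiagram.cells
    (Function.Injective.injOn fun _ _ h => YoungDiagram.ext h)

theorem mem_subDiagrams {ν lam : YoungDiagram} : ν ∈ subDiagrams lam ↔ ν ≤ lam := by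
  rw [subDiagrams, Finset.mem_preimage, Finset.mem_powerset, YoungDiagram.cells_subset_iff]

theorem apply_eq_sum (F : Module.End R (YoungDiagram →₀ R)) (lam : YoungDiagram)
    (S : Finset YoungDiagram) (hS : ∀ ν ∉ S, F (Finsupp.single ν 1) lam = 0)
    (v : YoungDiagram →₀ R) : F v lam = ∑ ν ∈ S, v ν * F (Finsupp.single ν 1) lam := by
  classical
  induction v using Finsupp.induction_linear with
  | zero => simp
  | add f g hf hg =>
    simp only [map_add, Finsupp.add_apply, hf, hg, add_mul, Finset.sum_add_distrib]
  | single ν c =>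
    have e : Finsupp.single ν c = c • Finsupp.single ν (1 : R) := by
      rw [Finsupp.smul_single, smul_eq_mul, mul_one]
    have : F (Finsupp.single ν c) lam = c * F (Finsupp.single ν 1) lam := by
      rw [e, map_smul, Finsupp.smul_apply, smul_eq_mul]
    rw [this]
    by_cases h : ν ∈ S
    · rw [Finset.sum_eq_single_of_mem ν h, Finsupp.single_eq_same]
      intro κ _ hκ
      rw [Finsupp.single_eq_of_ne hκ, zero_mul]
    · rw [hS ν h, mul_zero, Finset.sum_eq_zero]
      intro κ hκ
      rw [Finsupp.single_eq_of_ne (ne_of_mem_of_not_mem hκ h), zero_mul]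

variable {L : Type*} [Fintype L]

theorem mem_superTableaux {n : ℕ} {μ lam : YoungDiagram} {le : L → L → Prop} {hz : L → Prop}
    {T : Finset (Finset (ℕ × ℕ) × L)} :
    T ∈ superTableaux n μ lam L le hz ↔ IsSuperTableau n μ lam le hz T := by
  classical
  rw [superTableaux, Finset.mem_filter, and_iff_right_iff_imp]
  intro h
  refine Finset.mem_powerset.2 fun p hp => Finset.mem_product.2
    ⟨Finset.mem_powerset.2 fun x hx => ?_, Finset.mem_univ _⟩
  rw [← h.2.2.2.1]
  exact mem_supFst.2 ⟨p, hp, hx⟩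

/-- The super tableaux of shape `lam / μ` with letters in the list `l`. -/
noncomputable def tabs (n : ℕ) (le : L → L → Prop) (b : L → Bool) (l : List L)
    (μ lam : YoungDiagram) : Finset (Finset (Finset (ℕ × ℕ) × L)) :=
  @Finset.filter _ (fun T => ∀ p ∈ T, p.2 ∈ l) (Classical.decPred _)
    (superTableaux n μ lam L le fun a => b a = true)

theorem mem_tabs {n : ℕ} {μ lam : YoungDiagram} {le : L → L → Prop} {b : L → Bool} {l : List L}
    {T : Finset (Finset (ℕ × ℕ) × L)} :
    T ∈ tabs n le b l μ lam ↔
      IsSuperTableau n μ lam le (fun a => b a = true) T ∧ ∀ p ∈ T, p.2 ∈ l := by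
  rw [← mem_superTableaux]
  exact @Finset.mem_filter _ _ (Classical.decPred _) _ _

/-- Splitting off the largest letter. -/
theorem tabs_cons_sum {n : ℕ} {le : L → L → Prop} (b : L → Bool) (q : R) (c : L → R)
    (hrefl : ∀ x, le x x) (htrans : ∀ x y z, le x y → le y z → le x z)
    {l : List L} {a : L} (hl : (a :: l).Pairwise fun x y => le y x ∧ ¬le x y)
    (μ lam : YoungDiagram) :
    ∑ T ∈ tabs n le b (a :: l) μ lam, ∏ p ∈ T, (c p.2 * q ^ spin p.1) =
      ∑ ν ∈ subDiagrams lam, (∑ T ∈ tabs n le b l μ ν, ∏ p ∈ T, (c p.2 * q ^ spin p.1)) *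
        stripSum n (b a) q (c a) (fun _ => True) ν lam := by
  classical
  have hla := (List.pairwise_cons.1 hl).1
  have hne : ∀ x ∈ l, x ≠ a := by
    rintro x hx rfl
    exact (hla x hx).2 (hla x hx).1
  simp only [stripSum, Finset.sum_mul_sum, ← Finset.sum_product']
  rw [Finset.sum_sigma']
  have hshape : ∀ {ν T}, IsSuperTableau n μ ν le (fun a => b a = true) T →
      ν.cells = μ.cells ∪ (T.sup fun p => p.1) := fun h => by
    rw [h.2.2.2.1, Finset.union_sdiff_of_subset (YoungDiagram.cells_subset_iff.2 h.1)]
  have hrec : ∀ {ν T} (D : Finset (Finset (ℕ × ℕ))), T ∈ tabs n le b l μ ν →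
      (T ∪ D.image fun t => (t, a)).filter (fun p => p.2 ≠ a) = T ∧
      ∀ t, (t, a) ∈ (T ∪ D.image fun t => (t, a)) ↔ t ∈ D := by
    intro ν T D hT
    have h2 := (mem_tabs.1 hT).2
    constructor
    · ext p
      simp only [Finset.mem_filter, Finset.mem_union, Finset.mem_image]
      constructor
      · rintro ⟨h | ⟨t, ht, rfl⟩, h'⟩
        exacts [h, absurd rfl h']
      · exact fun h => ⟨Or.inl h, hne _ (h2 p h)⟩
    · intro t
      simp only [Finset.mem_union, Finset.mem_image, Prod.mk.injEq, and_true, exists_eq_right]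
      exact ⟨fun h => h.resolve_left fun h => hne _ (h2 _ h) rfl, Or.inr⟩
  symm
  refine Finset.sum_bij (fun s _ => s.2.1 ∪ s.2.2.image fun t => (t, a)) ?_ ?_ ?_ ?_
  · rintro ⟨ν, T, D⟩ hs
    simp only [Finset.mem_sigma, Finset.mem_product, mem_strips] at hs
    obtain ⟨-, hT, hD, -⟩ := hs
    obtain ⟨hT, hTl⟩ := mem_tabs.1 hT
    refine mem_tabs.2 ⟨hT.join htrans hla hTl hD, fun p hp => ?_⟩
    simp only [Finset.mem_union, Finset.mem_image] at hp
    rcases hp with hp | ⟨t, -, rfl⟩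
    exacts [List.mem_cons_of_mem _ (hTl p hp), List.mem_cons_self]
  · rintro ⟨ν, T, D⟩ hs ⟨ν', T', D'⟩ hs' heq
    simp only [Finset.mem_sigma, Finset.mem_product] at hs hs'
    simp only at heq
    have r1 := hrec D hs.2.1
    have r2 := hrec D' hs'.2.1
    rw [heq] at r1
    obtain rfl : T = T' := r1.1.symm.trans r2.1
    obtain rfl : D = D' := by ext1 t; rw [← r1.2, ← r2.2]
    obtain rfl : ν = ν' := YoungDiagram.ext
      ((hshape (mem_tabs.1 hs.2.1).1).trans (hshape (mem_tabs.1 hs'.2.1).1).symm)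
    rfl
  · intro T hT
    obtain ⟨hT, hTl⟩ := mem_tabs.1 hT
    obtain ⟨ν, h1, h2⟩ := hT.split hrefl htrans hl hTl
    refine ⟨⟨ν, T.filter fun p => p.2 ≠ a, (T.filter fun p => p.2 = a).image Prod.fst⟩, ?_, ?_⟩
    · simp only [Finset.mem_sigma, Finset.mem_product, mem_strips, mem_tabs, mem_subDiagrams]
      refine ⟨h2.le, ⟨h1, fun p hp => ?_⟩, h2, fun _ _ _ _ => trivial⟩
      obtain ⟨hp, e⟩ := Finset.mem_filter.1 hp
      exact (List.mem_cons.1 (hTl p hp)).resolve_left e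
    · ext ⟨t, x⟩
      simp only [Finset.mem_union, Finset.mem_image, Finset.mem_filter, Prod.mk.injEq,
        Prod.exists, exists_and_right, exists_eq_right]
      by_cases e : x = a
      · subst e; simp
      · simp [e, Ne.symm e]
  · rintro ⟨ν, T, D⟩ hs
    simp only [Finset.mem_sigma, Finset.mem_product] at hs
    have h2 := (mem_tabs.1 hs.2.1).2
    simp only
    rw [Finset.prod_union, Finset.prod_image]
    · intro t _ t' _ h
      exact congrArg Prod.fst h
    · refine Finset.disjoint_left.2 fun p hp hp' => ?_
      obtain ⟨t, -, rfl⟩ := Finset.mem_image.1 hp'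
      exact hne _ (h2 _ hp) rfl

/-- The product of the operators of the letters, in decreasing order from left to right,
generates the super tableaux. -/
theorem tabs_sum {n : ℕ} (hn : 1 ≤ n) {le : L → L → Prop} (b : L → Bool) (q : R) (c : L → R)
    (hrefl : ∀ x, le x x) (htrans : ∀ x y z, le x y → le y z → le x z) (N : ℕ)
    (μ : YoungDiagram) (l : List L) (hl : l.Pairwise fun x y => le y x ∧ ¬le x y) :
    ∀ lam : YoungDiagram, (∀ x ∈ lam.cells, x.1 < N ∧ x.2 < N) →
    ∑ T ∈ tabs n le b l μ lam, ∏ p ∈ T, (c p.2 * q ^ spin p.1) =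
      (l.map fun a => letterOp (fun i : ℕ => addOp n q ((i : ℤ) - N)) (2 * N) (b a) (c a)).prod
        (Finsupp.single μ 1) lam := by
  classical
  induction l with
  | nil =>
    intro lam _
    have hT : ∀ T ∈ tabs n le b [] μ lam, T = ∅ ∧ μ = lam := by
      intro T hT
      obtain ⟨h, h'⟩ := mem_tabs.1 hT
      have e : T = ∅ := Finset.eq_empty_of_forall_notMem fun p hp => List.not_mem_nil (h' p hp)
      refine ⟨e, le_antisymm h.1 ?_⟩
      have := h.2.2.2.1
      rw [e, Finset.sup_empty] at this
      exact YoungDiagram.cells_subset_iff.1 (Finset.sdiff_eq_empty_iff_subset.1 this.symm)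
    rw [List.map_nil, List.prod_nil, Module.End.one_apply]
    by_cases e : μ = lam
    · subst e
      have : tabs n le b [] μ μ = {∅} := by
        ext T
        rw [Finset.mem_singleton]
        refine ⟨fun h => (hT T h).1, ?_⟩
        rintro rfl
        refine mem_tabs.2 ⟨⟨le_rfl, ?_, ?_, ?_, fun _ => ⟨μ, ?_⟩, ?_⟩, ?_⟩ <;> simp
      rw [this]
      simp
    · rw [Finsupp.single_eq_of_ne (Ne.symm e), Finset.sum_eq_zero]
      exact fun T h => (e (hT T h).2).elim
  | cons a l ih =>
    intro lam hN
    rw [tabs_cons_sum b q c hrefl htrans hl, List.map_cons, List.prod_cons, Module.End.mul_apply,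
      apply_eq_sum _ lam (subDiagrams lam)]
    · refine Finset.sum_congr rfl fun ν hν => ?_
      rw [letterOp_apply hn _ _ _ _ _ _ hN, ih (List.pairwise_cons.1 hl).2 ν fun x hx =>
        hN x (YoungDiagram.cells_subset_iff.2 (mem_subDiagrams.1 hν) hx)]
    · intro ν hν
      rw [letterOp_apply hn _ _ _ _ _ _ hN, stripSum, Finset.sum_eq_zero]
      exact fun D hD => (hν (mem_subDiagrams.2 (mem_strips.1 hD).1.le)).elim

theorem weight_eq (q : R) (c : L → R) (T : Finset (Finset (ℕ × ℕ) × L)) :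
    q ^ tabSpin T * ∏ a : L, c a ^ tabWt T a = ∏ p ∈ T, (c p.2 * q ^ spin p.1) := by
  classical
  rw [Finset.prod_mul_distrib, Finset.prod_pow_eq_pow_sum, mul_comm, tabSpin,
    ← Finset.prod_fiberwise' T (fun p => p.2) c]
  congr 1
  refine Finset.prod_congr rfl fun a _ => ?_
  rw [Finset.prod_const, tabWt]

/-- Permuting the variables by a permutation of the letters which respects the two kinds of
letters does not change the super LLT polynomial. -/
theorem superLLT_perm {n : ℕ} (hn : 1 ≤ n) (ord : LinearOrder L) (b : L → Bool) (q : R)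
    (z : L → R) (π : Equiv.Perm L) (hπ : ∀ a, b (π a) = b a) (μ lam : YoungDiagram) :
    superLLT n μ lam L ord.le (fun a => b a = true) q (z ∘ π) =
      superLLT n μ lam L ord.le (fun a => b a = true) q z := by
  obtain ⟨N, hN⟩ : ∃ N : ℕ, ∀ x ∈ lam.cells, x.1 < N ∧ x.2 < N := by
    refine ⟨lam.cells.sup (fun x => x.1 + x.2) + 1, fun x hx => ?_⟩
    have := Finset.le_sup (f := fun x : ℕ × ℕ => x.1 + x.2) hx
    omega
  set l : List L := (Finset.univ : Finset L).sort (· ≥ ·) with hl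
  have hmem : ∀ a, a ∈ l := fun a => by simp [hl]
  have hnd : l.Nodup := by simp [hl]
  have hpw : l.Pairwise fun x y => ord.le y x ∧ ¬ord.le x y := by
    refine (Finset.sortedGT_sort (Finset.univ : Finset L)).pairwise.imp fun h => ?_
    exact ⟨le_of_lt h, not_le_of_gt h⟩
  set F : Bool → R → Module.End R (YoungDiagram →₀ R) :=
    letterOp (fun i : ℕ => addOp n q ((i : ℤ) - N)) (2 * N)
  have hG : ∀ z : L → R, superLLT n μ lam L ord.le (fun a => b a = true) q z =
      (l.map fun a => F (b a) (if b a = true then z a else -z a)).prod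
        (Finsupp.single μ 1) lam := by
    intro z
    rw [← tabs_sum hn b q (fun a => if b a = true then z a else -z a) ord.le_refl ord.le_trans
      N μ l hpw lam hN, superLLT]
    refine Finset.sum_congr ?_ fun T _ => ?_
    · ext T
      rw [mem_superTableaux, mem_tabs]
      exact ⟨fun h => ⟨h, fun p _ => hmem _⟩, fun h => h.1⟩
    · convert weight_eq q (fun a => if b a = true then z a else -z a) T
  rw [hG, hG]
  have hperm : (l.map π).Perm l :=
    (List.perm_ext_iff_of_nodup (hnd.map π.injective) hnd).2 fun a =>
      ⟨fun _ => hmem a, fun _ => List.mem_map.2 ⟨π.symm a, hmem _, by simp⟩⟩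
  have e : (l.map fun a => F (b a) (if b a = true then (z ∘ π) a else -(z ∘ π) a)) =
      (l.map π).map fun a => F (b a) (if b a = true then z a else -z a) := by
    rw [List.map_map]
    refine List.map_congr_left fun a _ => ?_
    simp only [Function.comp, hπ]
  rw [e, (hperm.map _).prod_eq' ?_]
  refine List.Pairwise.map _ (fun _ _ _ => ?_) (List.pairwise_of_forall (R := fun _ _ => True)
    fun _ _ => trivial)
  exact (addOp_ribbonRel hn q N).letterOp_comm _ _ _ _ _

end final

/-- **Symmetry of super LLT polynomials** (Lam; Proposition 30 / `prop:orderdoesntmatter`).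
For every `n ≥ 1`, every skew shape `lam/μ`, alphabets `A = Fin r` (horizontal) and
`A' = Fin s` (vertical), and every total order on `A ⊕ A'` refining the natural orders of
`A` and of `A'`, the super LLT polynomial is symmetric in the variables `x_1, …, x_r`
(those attached to `A`) and, separately, in the variables `y_1, …, y_s` (those attached
to `A'`): permuting the values of the variables within either alphabet leaves it
unchanged, for any coefficient ring. -/
theorem superLLT_symmetric (n : ℕ) (hn : 1 ≤ n) (μ lam : YoungDiagram) (hμlam : μ ≤ lam)
    (r s : ℕ) (ord : LinearOrder (Fin r ⊕ Fin s))
    (hordA : ∀ i j : Fin r, i ≤ j → ord.le (Sum.inl i) (Sum.inl j))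
    (hordA' : ∀ i j : Fin s, i ≤ j → ord.le (Sum.inr i) (Sum.inr j))
    (R : Type*) [CommRing R] (q : R) (z : Fin r ⊕ Fin s → R) :
    (∀ σ : Equiv.Perm (Fin r),
      superLLT n μ lam (Fin r ⊕ Fin s) ord.le (fun a => a.isLeft = true) q
          (z ∘ Sum.map σ id) =
        superLLT n μ lam (Fin r ⊕ Fin s) ord.le (fun a => a.isLeft = true) q z) ∧
    (∀ τ : Equiv.Perm (Fin s),
      superLLT n μ lam (Fin r ⊕ Fin s) ord.le (fun a => a.isLeft = true) q
          (z ∘ Sum.map id τ) =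
        superLLT n μ lam (Fin r ⊕ Fin s) ord.le (fun a => a.isLeft = true) q z) := by
  refine ⟨fun σ => ?_, fun τ => ?_⟩
  · exact superLLT_perm hn ord Sum.isLeft q z (Equiv.sumCongr σ (Equiv.refl _))
      (by rintro (a | a) <;> rfl) μ lam
  · exact superLLT_perm hn ord Sum.isLeft q z (Equiv.sumCongr (Equiv.refl _) τ)
      (by rintro (a | a) <;> rfl) μ lam

end SuperLLT
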